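/- arXiv:2306.15147 — 2 statements merged into one kernel-verified Lean document; each statement's English description precedes it below -/
import Mathlib

section
/- Let d ≥ 2 and 1 ≤ n < d. For Lebesgue-almost-every choice of the coefficient tuples ((b^{(j)}_1, a^{(j)}_1), …, (b^{(j)}_{r_j}, a^{(j)}_{r_j})) ∈ (ℝ^d × ℝ)^{r_j}, j = 1, …, n (with each r_j ≥ 2 fixed), the set X = X_1 ∩ ⋯ ∩ X_n, where X_j is the bend locus of the convex PL function f_j(x) = max_{1≤i≤r_j}(⟨x, b^{(j)}_i⟩ + a^{(j)}_i), is (d−n−1)-connected. -/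
open scoped RealInnerProductSpace
open MeasureTheory

/-- The convex PL function `x ↦ max_{1 ≤ i ≤ r} (⟪x, b i⟫ + a i)` (an `iSup` over the
nonempty finite index type `Fin r`, hence a maximum). -/
noncomputable def plMax {d r : ℕ} (b : Fin r → EuclideanSpace ℝ (Fin d)) (a : Fin r → ℝ) :
    EuclideanSpace ℝ (Fin d) → ℝ :=
  fun x => ⨆ i : Fin r, (⟪x, b i⟫ + a i)

/-- The bend locus of a convex PL function: the set of points where it is not differentiable. -/
def bendLocus {d r : ℕ} (b : Fin r → EuclideanSpace ℝ (Fin d)) (a : Fin r → ℝ) :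
    Set (EuclideanSpace ℝ (Fin d)) :=
  {x | ¬ DifferentiableAt ℝ (plMax b a) x}

/-- A topological space `Y` is `m`-connected (`m ≥ 0`): it is nonempty, path-connected,
and all homotopy groups `π_k(Y, y)` for `1 ≤ k ≤ m` and all basepoints `y` are trivial. -/
def SpaceMConnected (m : ℕ) (Y : Type*) [TopologicalSpace Y] : Prop :=
  Nonempty Y ∧ PathConnectedSpace Y ∧
    ∀ k : ℕ, 1 ≤ k → k ≤ m → ∀ y : Y, Subsingleton (HomotopyGroup (Fin k) Y y)

/-!
A convex PL function with distinct slopes bends exactly where its maximum is attained at least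
twice, so the intersection `X` of the bend loci is a finite union of polyhedra and hence has a
neighbourhood `W` with a retraction `W → X`. Null homotopies in `ℝ^d` of loops of dimension less
than `d - n` in `X` are maps of cubes of dimension `m ≤ d - n`; it suffices to push these into `W`,
keeping the points that are already mapped to `X` fixed.

Let `β` be large. The function `pot q β = ∑ max(h, 0) ^ 3`, where `h = 1 - ∑ₖ exp (-β gₖ)` runs
over all affine functions of all families and the `gₖ` are the gaps between that function and its
competitors, vanishes on `X` and exceeds `1 / 8` on a large ball minus `W`. At every point each
family has at most one positive `h`, so the gradient of `pot q β` is a combination of at most `n`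
vectors `∇h`, and it is also a combination with nonnegative coefficients of differences of slopes.
For generic slopes two things follow.
* At a critical point with positive potential the relevant `∇h` are linearly dependent, so their
  orthogonal complement `F` has dimension greater than `d - n ≥ m`; the Hessian is negative definite
  on `F` because the `h` are concave. Along a map of an `m`-cube the component in `F` of the
  gradient can be perturbed to be nowhere zero, since `m < dim F`, and its opposite is then a
  direction in which the potential decreases quadratically.
* Far from the origin the gradient does not point towards the origin, so the potential can be
  decreased without leaving a large ball.

Compactness turns these local descents into a map of the cube whose image has potential at most
`1 / 8`, and which thus takes its values in `W`.
-/

open Set Filter Metric Module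
open scoped Topology

section NbhdExtensor

variable {X Y : Type*}

/-- The set `A` is a neighbourhood extensor for the space `X`: every continuous map to `A` from a
closed subset `Z` of `X` extends to a neighbourhood of `Z`. Partial maps are encoded as total maps
`X → Y` whose values outside of the domain are irrelevant. -/
def IsNbhdExtensor (X : Type*) [TopologicalSpace X] [TopologicalSpace Y] (A : Set Y) : Prop :=
  ∀ (Z : Set X) (f : X → Y), IsClosed Z → ContinuousOn f Z → MapsTo f Z A →
    ∃ g : X → Y, EqOn g f Z ∧ ∀ᶠ x in 𝓝ˢ Z, ContinuousAt g x ∧ g x ∈ A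

theorem isNbhdExtensor_empty [TopologicalSpace X] [TopologicalSpace Y] :
    IsNbhdExtensor X (∅ : Set Y) := by
  intro Z f _ _ hfZ
  obtain rfl : Z = ∅ := eq_empty_of_forall_notMem fun x hx => hfZ hx
  exact ⟨f, eqOn_empty _ _, by simp⟩

theorem exists_continuous_retraction_of_convex {E : Type*} [NormedAddCommGroup E]
    [InnerProductSpace ℝ E] [CompleteSpace E] {K : Set E} (hne : K.Nonempty) (hK : IsClosed K)
    (hconv : Convex ℝ K) : ∃ ρ : E → E, Continuous ρ ∧ (∀ x, ρ x ∈ K) ∧ ∀ x ∈ K, ρ x = x := by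
  choose ρ hρK hρ using exists_norm_eq_iInf_of_complete_convex hne hK.isComplete hconv
  have obtuse (x) : ∀ y ∈ K, ⟪x - ρ x, y - ρ x⟫ ≤ 0 :=
    (norm_eq_iInf_iff_real_inner_le_zero hconv (hρK x)).1 (hρ x)
  refine ⟨ρ, LipschitzWith.continuous (K := 1) (.of_dist_le_mul fun x y => ?_), hρK,
    fun x hx => ?_⟩
  · rw [dist_eq_norm, dist_eq_norm, NNReal.coe_one, one_mul]
    have monotone : ‖ρ x - ρ y‖ ^ 2 ≤ ⟪x - y, ρ x - ρ y⟫ := by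
      have hx := obtuse x (ρ y) (hρK y)
      have hy := obtuse y (ρ x) (hρK x)
      rw [← real_inner_self_eq_norm_sq]
      simp only [inner_sub_left, inner_sub_right] at hx hy ⊢
      linarith
    by_contra! h
    nlinarith [real_inner_le_norm (x - y) (ρ x - ρ y), norm_nonneg (x - y)]
  · exact (sub_eq_zero.1 (real_inner_self_nonpos.1 (obtuse x x hx))).symm

theorem isNbhdExtensor_of_convex [TopologicalSpace X] [NormalSpace X] {E : Type*}
    [NormedAddCommGroup E] [InnerProductSpace ℝ E] [FiniteDimensional ℝ E] {K : Set E}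
    (hK : IsClosed K) (hconv : Convex ℝ K) : IsNbhdExtensor X K := by
  rcases K.eq_empty_or_nonempty with rfl | hne
  · exact isNbhdExtensor_empty
  have : TietzeExtension E := RCLike.instTietzeExtensionTVS (𝕜 := ℝ)
  obtain ⟨ρ, hρ, hρK, hρ_eq⟩ := exists_continuous_retraction_of_convex hne hK hconv
  intro Z f hZ hf hfZ
  obtain ⟨g, hg⟩ := ContinuousMap.exists_restrict_eq hZ ⟨Z.domRestrict f, hf.domRestrict⟩
  refine ⟨ρ ∘ g, fun x hx => ?_, .of_forall fun x => ⟨(hρ.comp g.continuous).continuousAt, hρK _⟩⟩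
  have hgx : g x = f x := DFunLike.congr_fun hg ⟨x, hx⟩
  rw [Function.comp_apply, hgx, hρ_eq _ (hfZ hx)]

theorem exists_isClosed_cover_inter_union_eq [PseudoEMetricSpace X] {A B : Set X}
    (hA : IsClosed A) (hB : IsClosed B) :
    ∃ A' B' : Set X, IsClosed A' ∧ IsClosed B' ∧ A' ∪ B' = univ ∧
      A' ∩ (A ∪ B) = A ∧ B' ∩ (A ∪ B) = B := by
  have hsub {C D : Set X} (hC : IsClosed C) :
      {x | infEDist x C ≤ infEDist x D} ∩ (C ∪ D) = C := by
    refine Subset.antisymm ?_ fun x hx => ⟨by simp [infEDist_zero_of_mem hx], .inl hx⟩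
    rintro x ⟨hle, hx | hx⟩
    · exact hx
    · rw [mem_ofPred_eq, infEDist_zero_of_mem hx, nonpos_iff_eq_zero] at hle
      exact (mem_iff_infEDist_zero_of_closed hC).2 hle
  exact ⟨{x | infEDist x A ≤ infEDist x B}, {x | infEDist x B ≤ infEDist x A},
    isClosed_le continuous_infEDist continuous_infEDist,
    isClosed_le continuous_infEDist continuous_infEDist,
    eq_univ_of_forall fun x => le_total (infEDist x A) (infEDist x B),
    hsub hA, union_comm A B ▸ hsub hB⟩

section Piecewise

variable [TopologicalSpace X] [TopologicalSpace Y] {s t : Set X} {x : X}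

theorem eventually_mem_imp_of_isClosed {p : X → Prop} (hs : IsClosed s)
    (h : x ∈ s → ∀ᶠ y in 𝓝 x, p y) : ∀ᶠ y in 𝓝 x, y ∈ s → p y := by
  by_cases hx : x ∈ s
  · exact (h hx).mono fun y hy _ => hy
  · filter_upwards [hs.isOpen_compl.mem_nhds hx] with y hy hys using absurd hys hy

theorem continuousAt_piecewise_of_isClosed {f g : X → Y} [∀ x, Decidable (x ∈ s)]
    (hs : IsClosed s) (ht : IsClosed t) (hst : s ∪ t = univ) (hf : x ∈ s → ContinuousAt f x)
    (hg : x ∈ t → ContinuousAt g x) (hfg : x ∈ s → x ∈ t → f x = g x) :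
    ContinuousAt (s.piecewise f g) x := by
  have hcover (y) : y ∈ s ∨ y ∈ t := by simpa [← hst] using mem_univ y
  by_cases hxs : x ∈ s
  · by_cases hxt : x ∈ t
    · rw [ContinuousAt, piecewise_eq_of_mem _ _ _ hxs]
      exact ((hf hxs).mono_left inf_le_left).piecewise
        (hfg hxs hxt ▸ (hg hxt).mono_left inf_le_left)
    · refine (hf hxs).congr ?_
      filter_upwards [ht.isOpen_compl.mem_nhds hxt] with y hy
      exact (piecewise_eq_of_mem _ _ _ ((hcover y).resolve_right hy)).symm
  · refine (hg ((hcover x).resolve_left hxs)).congr ?_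
    filter_upwards [hs.isOpen_compl.mem_nhds hxs] with y hy
    exact (piecewise_eq_of_notMem _ _ _ hy).symm

theorem IsNbhdExtensor.exists_continuousOn_closure [NormalSpace X] {A : Set Y}
    (hA : IsNbhdExtensor X A) {f : X → Y} (hs : IsClosed s) (hf : ContinuousOn f s)
    (hfA : MapsTo f s A) :
    ∃ (g : X → Y) (V : Set X), IsOpen V ∧ s ⊆ V ∧ EqOn g f s ∧ ContinuousOn g (closure V) ∧
      MapsTo g (closure V) A := by
  obtain ⟨g, hgf, hg⟩ := hA s f hs hf hfA
  obtain ⟨U, hU, hsU, hgU⟩ := eventually_nhdsSet_iff_exists.1 hg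
  obtain ⟨V, hV, hsV, hVU⟩ := normal_exists_closure_subset hs hU hsU
  exact ⟨g, V, hV, hsV, hgf, fun x hx => (hgU x (hVU hx)).1.continuousWithinAt,
    fun x hx => (hgU x (hVU hx)).2⟩

theorem IsNbhdExtensor.exists_eqOn_eqOn {A : Set Y} (hA : IsNbhdExtensor X A) {f g : X → Y}
    (hs : IsClosed s) (ht : IsClosed t) (hf : ContinuousOn f s) (hg : ContinuousOn g t)
    (hfA : MapsTo f s A) (hgA : MapsTo g t A) (hfg : EqOn f g (s ∩ t)) :
    ∃ h : X → Y, EqOn h f s ∧ EqOn h g t ∧ ∀ᶠ x in 𝓝ˢ s, ContinuousAt h x ∧ h x ∈ A := by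
  classical
  have hpf : EqOn (t.piecewise g f) f s := fun x hx => by
    by_cases hxt : x ∈ t
    · rw [piecewise_eq_of_mem _ _ _ hxt, hfg ⟨hx, hxt⟩]
    · exact piecewise_eq_of_notMem _ _ _ hxt
  have hpg : EqOn (t.piecewise g f) g t := piecewise_eqOn t g f
  obtain ⟨h, hh, hnear⟩ := hA (s ∪ t) (t.piecewise g f) (hs.union ht)
    ((hf.congr hpf).union_of_isClosed (hg.congr hpg) hs ht)
    ((hfA.congr hpf.symm).union (hgA.congr hpg.symm))
  exact ⟨h, (hh.mono subset_union_left).trans hpf, (hh.mono subset_union_right).trans hpg,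
    hnear.filter_mono (nhdsSet_mono subset_union_left)⟩

end Piecewise

theorem IsNbhdExtensor.union [PseudoEMetricSpace X] [TopologicalSpace Y] {A B : Set Y}
    (hA : IsNbhdExtensor X A) (hB : IsNbhdExtensor X B) (hAB : IsNbhdExtensor X (A ∩ B))
    (hAc : IsClosed A) (hBc : IsClosed B) : IsNbhdExtensor X (A ∪ B) := by
  classical
  intro Z f hZ hf hfZ
  have hZA : IsClosed (Z ∩ f ⁻¹' A) := hf.preimage_isClosed_of_isClosed hZ hAc
  have hZB : IsClosed (Z ∩ f ⁻¹' B) := hf.preimage_isClosed_of_isClosed hZ hBc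
  obtain ⟨s, t, hs, ht, hst, hsZ, htZ⟩ := exists_isClosed_cover_inter_union_eq hZA hZB
  rw [← inter_union_distrib_left, ← preimage_union, inter_eq_left.2 hfZ.subset_preimage] at hsZ htZ
  -- First extend `f` across the interface `s ∩ t` of the two pieces, as a map to `A ∩ B`.
  obtain ⟨k, V, hV, hZV, hkf, hk, hkAB⟩ := hAB.exists_continuousOn_closure
    ((hs.inter ht).inter hZ) (hf.mono inter_subset_right) fun x hx =>
      ⟨(hsZ.subset ⟨hx.1.1, hx.2⟩).2, (htZ.subset ⟨hx.1.2, hx.2⟩).2⟩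
  have hT : IsClosed (s ∩ t ∩ closure V) := (hs.inter ht).inter isClosed_closure
  obtain ⟨a, haf, hak, ha⟩ := hA.exists_eqOn_eqOn hZA hT (hf.mono inter_subset_left)
    (hk.mono inter_subset_right) (fun x hx => hx.2) (fun x hx => (hkAB hx.2).1)
    fun x hx => (hkf ⟨hx.2.1, hx.1.1⟩).symm
  obtain ⟨b, hbf, hbk, hb⟩ := hB.exists_eqOn_eqOn hZB hT (hf.mono inter_subset_left)
    (hk.mono inter_subset_right) (fun x hx => hx.2) (fun x hx => (hkAB hx.2).2)
    fun x hx => (hkf ⟨hx.2.1, hx.1.1⟩).symm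
  have hcover (x) (hx : x ∉ s) : x ∈ t := ((hst ▸ mem_univ x : x ∈ s ∪ t)).resolve_left hx
  refine ⟨s.piecewise a b, fun x hx => ?_, eventually_nhdsSet_iff_forall.2 fun z hz => ?_⟩
  · by_cases hxs : x ∈ s
    · rw [piecewise_eq_of_mem _ _ _ hxs, haf (hsZ.subset ⟨hxs, hx⟩)]
    · rw [piecewise_eq_of_notMem _ _ _ hxs, hbf (htZ.subset ⟨hcover x hxs, hx⟩)]
  filter_upwards [eventually_mem_imp_of_isClosed hs fun hzs =>
      eventually_nhdsSet_iff_forall.1 ha z (hsZ.subset ⟨hzs, hz⟩),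
    eventually_mem_imp_of_isClosed ht fun hzt =>
      eventually_nhdsSet_iff_forall.1 hb z (htZ.subset ⟨hzt, hz⟩),
    eventually_mem_imp_of_isClosed (hs.inter ht) fun hzst =>
      hV.mem_nhds (hZV ⟨hzst, hz⟩)] with x hxa hxb hxV
  refine ⟨continuousAt_piecewise_of_isClosed hs ht hst (fun h => (hxa h).1) (fun h => (hxb h).1)
    fun hxs hxt => ?_, ?_⟩
  · have hxT : x ∈ s ∩ t ∩ closure V := ⟨⟨hxs, hxt⟩, subset_closure (hxV ⟨hxs, hxt⟩)⟩
    rw [hak hxT, hbk hxT]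
  · by_cases hxs : x ∈ s
    · exact .inl ((piecewise_eq_of_mem _ a b hxs).symm ▸ (hxa hxs).2)
    · exact .inr ((piecewise_eq_of_notMem _ a b hxs).symm ▸ (hxb (hcover x hxs)).2)

theorem isNbhdExtensor_biUnion_of_convex [PseudoEMetricSpace X] {E : Type*}
    [NormedAddCommGroup E] [InnerProductSpace ℝ E] [FiniteDimensional ℝ E] {ι : Type*}
    (s : Finset ι) (K : ι → Set E) (hK : ∀ i, IsClosed (K i)) (hconv : ∀ i, Convex ℝ (K i)) :
    IsNbhdExtensor X (⋃ i ∈ s, K i) := by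
  classical
  induction s using Finset.induction_on generalizing K with
  | empty => simpa using isNbhdExtensor_empty
  | insert a s _ ih =>
    rw [Finset.set_biUnion_insert]
    refine (isNbhdExtensor_of_convex (hK a) (hconv a)).union (ih K hK hconv) ?_ (hK a)
      (s.finite_toSet.isClosed_biUnion fun i _ => hK i)
    rw [inter_iUnion₂]
    exact ih _ (fun i => (hK a).inter (hK i)) fun i => (hconv a).inter (hconv i)

end NbhdExtensor

section Cube

variable {m : ℕ} {F : Type*} [NormedAddCommGroup F] [NormedSpace ℝ F] [FiniteDimensional ℝ F]

theorem exists_continuousMap_ne_zero_norm_sub_le (hm : m < finrank ℝ F)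
    (γ : C(Fin m → unitInterval, F)) {ε : ℝ} (hε : 0 < ε) :
    ∃ γ' : C(Fin m → unitInterval, F), ∀ s, γ' s ≠ 0 ∧ ‖γ' s - γ s‖ ≤ ε := by
  let incl : C(Fin m → unitInterval, Fin m → ℝ) := ⟨fun s i => s i, by fun_prop⟩
  let clamp : C(Fin m → ℝ, Fin m → unitInterval) :=
    ⟨fun x i => projIcc 0 1 zero_le_one (x i), by fun_prop⟩
  have clamp_incl (s) : clamp (incl s) = s := funext fun i => projIcc_val zero_le_one (s i)
  obtain ⟨g, hg, hgγ, -⟩ := (γ.comp clamp).continuous.exists_contDiff_approx 1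
    (ε := fun _ => ε / 2) continuous_const fun _ => half_pos hε
  -- A smooth map to a space of larger dimension misses arbitrarily small vectors `z`.
  have hdense : Dense (range g)ᶜ :=
    hg.dense_compl_range_of_finrank_lt_finrank (by simpa using hm)
  obtain ⟨z, hz, hzg⟩ := dense_iff.1 hdense 0 (ε / 2) (half_pos hε)
  refine ⟨⟨fun s => g (incl s) - z, by have := hg.continuous; fun_prop⟩, fun s => ⟨?_, ?_⟩⟩
  · exact fun h => hzg ⟨incl s, sub_eq_zero.1 h⟩
  · have hs : ‖g (incl s) - γ s‖ < ε / 2 := by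
      simpa [clamp_incl, dist_eq_norm] using hgγ (incl s)
    calc ‖g (incl s) - z - γ s‖ = ‖g (incl s) - γ s - z‖ := by rw [sub_right_comm]
      _ ≤ ‖g (incl s) - γ s‖ + ‖z‖ := norm_sub_le _ _
      _ ≤ ε := by linarith [mem_ball_zero_iff.1 hz]

end Cube

section Push

variable {S E : Type*} [TopologicalSpace S]

/-- Every continuous family of points of `L`, parametrized by `S`, can be deformed inside `L` by
an arbitrarily small amount such that the potential `Ψ` drops by a definite amount `η` at the
points coming from `U` and essentially does not increase elsewhere. The points at nonpositive
potential do not move. -/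
def Pushable (S : Type*) [TopologicalSpace S] [PseudoMetricSpace E] (L : Set E) (Ψ : E → ℝ)
    (U : Set E) : Prop :=
  ∀ μ > 0, ∃ η > 0, ∀ e > 0, ∀ D : C(S, E), (∀ s, D s ∈ L) → ∃ D' : C(S, E), ∀ s,
    D' s ∈ L ∧ (Ψ (D s) ≤ 0 → D' s = D s) ∧ dist (D' s) (D s) ≤ μ ∧ Ψ (D' s) ≤ Ψ (D s) + e ∧
    (D s ∈ U → Ψ (D' s) ≤ Ψ (D s) - η)

namespace Pushable

variable [PseudoMetricSpace E] {L U V : Set E} {Ψ : E → ℝ}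

theorem empty : Pushable S L Ψ ∅ := fun μ hμ =>
  ⟨1, one_pos, fun e he D hD => ⟨D, fun s => ⟨hD s, fun _ => rfl, by simpa using hμ.le,
    by linarith, fun h => h.elim⟩⟩⟩

theorem mono (h : Pushable S L Ψ V) (hUV : U ⊆ V) : Pushable S L Ψ U := by
  intro μ hμ
  obtain ⟨η, hη, h⟩ := h μ hμ
  refine ⟨η, hη, fun e he D hD => ?_⟩
  obtain ⟨D', hD'⟩ := h e he D hD
  exact ⟨D', fun s => (hD' s).imp_right fun h => h.imp_right fun h => h.imp_right fun h =>
    h.imp_right fun h hs => h (hUV hs)⟩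

theorem union {δ : ℝ} (hδ : 0 < δ) (hU : Pushable S L Ψ U)
    (hV : Pushable S L Ψ (thickening δ V)) : Pushable S L Ψ (U ∪ V) := by
  intro μ hμ
  obtain ⟨η₁, hη₁, h₁⟩ := hU (min (μ / 2) (δ / 2)) (by positivity)
  obtain ⟨η₂, hη₂, h₂⟩ := hV (μ / 2) (by positivity)
  refine ⟨min η₁ η₂ / 2, by positivity, fun e he D hD => ?_⟩
  obtain ⟨D₁, hD₁⟩ := h₁ (min (e / 2) (min η₁ η₂ / 2)) (by positivity) D hD
  obtain ⟨D₂, hD₂⟩ := h₂ (min (e / 2) (min η₁ η₂ / 2)) (by positivity) D₁ fun s => (hD₁ s).1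
  have he₁ : min (e / 2) (min η₁ η₂ / 2) ≤ e / 2 := min_le_left _ _
  have he₂ : min (e / 2) (min η₁ η₂ / 2) ≤ min η₁ η₂ / 2 := min_le_right _ _
  refine ⟨D₂, fun s => ?_⟩
  obtain ⟨-, hfix₁, hdist₁, hup₁, hdown₁⟩ := hD₁ s
  obtain ⟨hL, hfix₂, hdist₂, hup₂, hdown₂⟩ := hD₂ s
  refine ⟨hL, fun h => ?_, ?_, by linarith, ?_⟩
  · rw [hfix₂ (by rwa [hfix₁ h]), hfix₁ h]
  · linarith [dist_triangle (D₂ s) (D₁ s) (D s), min_le_left (μ / 2) (δ / 2)]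
  · rintro (hs | hs)
    · linarith [hdown₁ hs, min_le_left η₁ η₂]
    · have hnear : D₁ s ∈ thickening δ V :=
        mem_thickening_iff.2 ⟨D s, hs, by linarith [min_le_right (μ / 2) (δ / 2)]⟩
      linarith [hdown₂ hnear, min_le_right η₁ η₂]

theorem of_isCompact {K : Set E} (hK : IsCompact K)
    (h : ∀ x ∈ K, ∃ r > 0, Pushable S L Ψ (ball x r)) : Pushable S L Ψ K := by
  suffices hδ : ∃ δ > 0, Pushable S L Ψ (thickening δ K) by
    obtain ⟨δ, hδ, h⟩ := hδ
    exact h.mono (self_subset_thickening hδ K)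
  refine hK.induction_on (p := fun U => ∃ δ > 0, Pushable S L Ψ (thickening δ U))
    ⟨1, one_pos, by simpa using empty⟩ ?_ ?_ fun x hx => ?_
  · rintro U V hUV ⟨δ, hδ, h⟩
    exact ⟨δ, hδ, h.mono (thickening_subset_of_subset δ hUV)⟩
  · rintro U V ⟨δ, hδ, hU⟩ ⟨ε, hε, hV⟩
    refine ⟨min δ (ε / 2), by positivity, ?_⟩
    rw [thickening_union]
    refine union (half_pos hε) (hU.mono (thickening_mono (min_le_left _ _) U)) (hV.mono ?_)
    refine (thickening_thickening_subset _ _ V).trans (thickening_mono ?_ V)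
    linarith [min_le_right δ (ε / 2)]
  · obtain ⟨r, hr, h⟩ := h x hx
    refine ⟨ball x (r / 2), mem_nhdsWithin_of_mem_nhds (ball_mem_nhds x (half_pos hr)),
      r / 2, half_pos hr, h.mono ?_⟩
    rw [← thickening_singleton, ← thickening_singleton]
    simpa using thickening_thickening_subset (r / 2) (r / 2) {x}

theorem exists_le (hL : IsCompact L) (hΨ : Continuous Ψ) {δ : ℝ}
    (h : Pushable S L Ψ (L ∩ {x | δ ≤ Ψ x})) {ε : ℝ} (hε : δ < ε) (D : C(S, E))
    (hD : ∀ s, D s ∈ L) :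
    ∃ D' : C(S, E), ∀ s, D' s ∈ L ∧ (Ψ (D s) ≤ 0 → D' s = D s) ∧ Ψ (D' s) ≤ ε := by
  obtain ⟨η, hη, h⟩ := h 1 one_pos
  obtain ⟨M, hM⟩ := hL.bddAbove_image hΨ.continuousOn
  suffices hk : ∀ k : ℕ, ∃ D' : C(S, E), ∀ s, D' s ∈ L ∧ (Ψ (D s) ≤ 0 → D' s = D s) ∧
      Ψ (D' s) ≤ max (M - k * η) ε by
    obtain ⟨k, hk_large⟩ := Archimedean.arch (M - ε) hη
    obtain ⟨D', hD'⟩ := hk k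
    rw [nsmul_eq_mul] at hk_large
    exact ⟨D', fun s => (hD' s).imp_right fun h => h.imp_right fun h =>
      h.trans (max_le (by linarith) le_rfl)⟩
  intro k
  induction k with
  | zero => exact ⟨D, fun s => ⟨hD s, fun _ => rfl,
      le_max_of_le_left (by simpa using hM (mem_image_of_mem Ψ (hD s)))⟩⟩
  | succ k ih =>
    obtain ⟨D₁, hD₁⟩ := ih
    obtain ⟨D₂, hD₂⟩ := h (ε - δ) (sub_pos.2 hε) D₁ fun s => (hD₁ s).1
    refine ⟨D₂, fun s => ?_⟩
    obtain ⟨hL₁, hfix₁, hle₁⟩ := hD₁ s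
    obtain ⟨hL₂, hfix₂, -, hup, hdown⟩ := hD₂ s
    refine ⟨hL₂, fun h => by rw [hfix₂ (by rwa [hfix₁ h]), hfix₁ h], ?_⟩
    push_cast
    rcases le_or_gt δ (Ψ (D₁ s)) with hs | hs
    · have := hdown ⟨hL₁, hs⟩
      rcases le_max_iff.1 hle₁ with hle | hle
      · exact le_max_of_le_left (by linarith)
      · exact le_max_of_le_right (by linarith)
    · exact le_max_of_le_right (by linarith)

end Pushable

/-- Every continuous family, parametrized by `S`, of points of `L` close to `x` can be moved
inside `L` at unit speed in directions depending continuously on the parameter, such that the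
potential `Ψ` decreases at least quadratically in time, up to an arbitrarily small error. -/
def HasLocalDescent (S : Type*) [TopologicalSpace S] [NormedAddCommGroup E] [NormedSpace ℝ E]
    (L : Set E) (Ψ : E → ℝ) (x : E) : Prop :=
  ∃ r > 0, ∃ κ > 0, ∀ ε > 0, ∀ D : C(S, E), ∃ u : C(S, E), ∀ s, ‖u s‖ ≤ 1 ∧
    (D s ∈ ball x r → D s ∈ L → ∀ t ∈ Icc 0 r,
      D s + t • u s ∈ L ∧ Ψ (D s + t • u s) ≤ Ψ (D s) + ε - κ * t ^ 2)

theorem exists_continuousMap_eq_zero_eq_const [PseudoMetricSpace E] (x : E) {ρ T : ℝ}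
    (hρ : 0 < ρ) (hT : 0 ≤ T) :
    ∃ τ : C(E, ℝ), (∀ y, τ y ∈ Icc 0 T) ∧ (∀ y ∉ ball x ρ, τ y = 0) ∧
      ∀ y ∈ ball x (ρ / 2), τ y = T := by
  obtain ⟨χ, hχ₀, hχ₁, hχ⟩ := exists_continuous_zero_one_of_isClosed
    isOpen_ball.isClosed_compl isClosed_closedBall
    (disjoint_compl_left_iff_subset.2 (closedBall_subset_ball (x := x) (half_lt_self hρ)))
  refine ⟨⟨fun y => T * χ y, by fun_prop⟩, fun y => ⟨mul_nonneg hT (hχ y).1,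
    mul_le_of_le_one_right hT (hχ y).2⟩, fun y hy => ?_, fun y hy => ?_⟩
  · simp [hχ₀ hy]
  · simp [hχ₁ (ball_subset_closedBall hy)]

variable [NormedAddCommGroup E] [NormedSpace ℝ E] {L : Set E} {Ψ : E → ℝ}

theorem HasLocalDescent.exists_pushable_ball {x : E} (h : HasLocalDescent S L Ψ x)
    (hΨ : ContinuousAt Ψ x) (hx : 0 < Ψ x) : ∃ ρ > 0, Pushable S L Ψ (ball x ρ) := by
  obtain ⟨r, hr, κ, hκ, h⟩ := h
  obtain ⟨r', hr', hpos⟩ := Metric.mem_nhds_iff.1 (hΨ.eventually_const_lt hx)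
  have hρ : 0 < min r r' := lt_min hr hr'
  refine ⟨min r r' / 2, half_pos hρ, fun μ hμ => ⟨κ * min μ r ^ 2 / 2, by positivity,
    fun e he D hD => ?_⟩⟩
  obtain ⟨τ, hτ, hτ₀, hτ₁⟩ := exists_continuousMap_eq_zero_eq_const x hρ (lt_min hμ hr).le
  obtain ⟨u, hu⟩ := h (min e (κ * min μ r ^ 2 / 2)) (by positivity) D
  have hε₁ := min_le_left e (κ * min μ r ^ 2 / 2)
  have hε₂ := min_le_right e (κ * min μ r ^ 2 / 2)
  refine ⟨⟨fun s => D s + τ (D s) • u s, by fun_prop⟩, fun s => ?_⟩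
  simp only [ContinuousMap.coe_mk]
  have hstay (hs : D s ∉ ball x (min r r')) : D s + τ (D s) • u s = D s := by
    rw [hτ₀ _ hs, zero_smul, add_zero]
  have hmove (hs : D s ∈ ball x (min r r')) := (hu s).2 (ball_subset_ball (min_le_left _ _) hs)
    (hD s) _ (Icc_subset_Icc_right (min_le_right _ _) (hτ (D s)))
  refine ⟨?_, fun hs => ?_, ?_, ?_, fun hs => ?_⟩
  · by_cases hs : D s ∈ ball x (min r r')
    exacts [(hmove hs).1, (hstay hs).symm ▸ hD s]
  · exact hstay fun h => hs.not_gt (hpos (ball_subset_ball (min_le_right _ _) h))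
  · rw [dist_self_add_left, norm_smul, Real.norm_of_nonneg (hτ _).1]
    exact (mul_le_of_le_one_right (hτ _).1 (hu s).1).trans ((hτ _).2.trans (min_le_left _ _))
  · by_cases hs : D s ∈ ball x (min r r')
    · linarith [(hmove hs).2, mul_nonneg hκ.le (sq_nonneg (τ (D s)))]
    · rw [hstay hs]
      linarith
  · have := (hmove (ball_subset_ball (half_le_self hρ.le) hs)).2
    rw [hτ₁ _ hs] at this ⊢
    linarith

theorem exists_continuousMap_le_of_hasLocalDescent (hL : IsCompact L) (hΨ : Continuous Ψ)
    (h : ∀ x ∈ L, 0 < Ψ x → HasLocalDescent S L Ψ x) {ε : ℝ} (hε : 0 < ε) (D : C(S, E))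
    (hD : ∀ s, D s ∈ L) :
    ∃ D' : C(S, E), ∀ s, D' s ∈ L ∧ (Ψ (D s) ≤ 0 → D' s = D s) ∧ Ψ (D' s) ≤ ε := by
  refine Pushable.exists_le hL hΨ (.of_isCompact ?_ fun x hx => ?_) (half_lt_self hε) D hD
  · exact hL.inter_right (isClosed_le continuous_const hΨ)
  · have hpos : 0 < Ψ x := (half_pos hε).trans_le hx.2
    exact (h x hx.1 hpos).exists_pushable_ball hΨ.continuousAt hpos

end Push

section LocalDescent

variable {E : Type*} [NormedAddCommGroup E] [InnerProductSpace ℝ E]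

theorem add_smul_mem_ball_two_mul {x y u : E} {r t : ℝ} (hy : y ∈ ball x r) (hu : ‖u‖ ≤ 1)
    (ht : t ∈ Icc 0 r) : y + t • u ∈ ball x (2 * r) := by
  have htu : ‖t • u‖ ≤ t := by
    rw [norm_smul, Real.norm_of_nonneg ht.1]
    exact mul_le_of_le_one_right ht.1 hu
  rw [mem_ball] at hy ⊢
  calc dist (y + t • u) x ≤ ‖t • u‖ + dist y x := by
        simpa using dist_triangle (y + t • u) y x
    _ < 2 * r := by linarith [ht.2]

theorem norm_add_smul_le_of_inner_nonpos {y v : E} {t : ℝ} (ht : 0 ≤ t)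
    (h : ⟪y + t • v, v⟫ ≤ 0) : ‖y + t • v‖ ≤ ‖y‖ := by
  have hsq : ‖y‖ ^ 2 = ‖y + t • v‖ ^ 2 - 2 * (t * ⟪y + t • v, v⟫) + ‖t • v‖ ^ 2 := by
    rw [← inner_smul_right, ← norm_sub_sq_real, add_sub_cancel_right]
  refine le_of_sq_le_sq ?_ (norm_nonneg y)
  nlinarith [mul_nonneg ht (neg_nonneg.2 h), sq_nonneg ‖t • v‖]

theorem le_of_hasDerivAt_le {f f' B B' : ℝ → ℝ} {t : ℝ} (ht : 0 ≤ t)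
    (hf : ∀ τ, HasDerivAt f (f' τ) τ) (hB : ∀ τ, HasDerivAt B (B' τ) τ)
    (h' : ∀ τ ∈ Icc 0 t, f' τ ≤ B' τ) (h : f 0 ≤ B 0) : f t ≤ B t :=
  image_le_of_deriv_right_le_deriv_boundary
    (fun τ _ => (hf τ).continuousAt.continuousWithinAt) (fun τ _ => (hf τ).hasDerivWithinAt) h
    (fun τ _ => (hB τ).continuousAt.continuousWithinAt) (fun τ _ => (hB τ).hasDerivWithinAt)
    (fun τ hτ => h' τ (Ico_subset_Icc_self hτ)) ⟨ht, le_rfl⟩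

theorem exists_inner_neg_of_not_sameRay {g x : E} (h : ¬ SameRay ℝ g (-x)) :
    ∃ v : E, ‖v‖ ≤ 1 ∧ ⟪g, v⟫ < 0 ∧ ⟪x, v⟫ < 0 := by
  have hg : g ≠ 0 := by rintro rfl; exact h (.zero_left _)
  have hx : x ≠ 0 := by rintro rfl; exact h (by simp)
  have hlt : -(‖g‖ * ‖x‖) < ⟪g, x⟫ := by
    have hne : ⟪g, -x⟫ ≠ ‖g‖ * ‖-x‖ := fun he =>
      h (sameRay_iff_norm_smul_eq.2 (inner_eq_norm_mul_iff_real.1 he).symm)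
    have := lt_of_le_of_ne (real_inner_le_norm g (-x)) hne
    rw [inner_neg_right, norm_neg] at this
    linarith
  -- The vector opposite to the bisector of the angle between `g` and `x`.
  set w := ‖x‖ • g + ‖g‖ • x
  have hgw : 0 < ⟪g, w⟫ := by
    have : ⟪g, w⟫ = ‖g‖ * (‖g‖ * ‖x‖ + ⟪g, x⟫) := by
      simp only [w, inner_add_right, real_inner_smul_right, real_inner_self_eq_norm_sq]; ring
    exact this ▸ mul_pos (norm_pos_iff.2 hg) (by linarith)
  have hxw : 0 < ⟪x, w⟫ := by
    have : ⟪x, w⟫ = ‖x‖ * (‖g‖ * ‖x‖ + ⟪g, x⟫) := by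
      simp only [w, inner_add_right, real_inner_smul_right, real_inner_self_eq_norm_sq,
        real_inner_comm g x]; ring
    exact this ▸ mul_pos (norm_pos_iff.2 hx) (by linarith)
  have hw : w ≠ 0 := by
    intro hw
    simp [hw] at hgw
  have : 0 < ‖w‖⁻¹ := inv_pos.2 (norm_pos_iff.2 hw)
  refine ⟨-(‖w‖⁻¹ • w), by simp [norm_smul, hw], ?_, ?_⟩ <;>
  · rw [inner_neg_right, real_inner_smul_right, neg_lt_zero]
    positivity

section Gradient

variable [CompleteSpace E] {Ψ : E → ℝ} {G : E → E} {x y e : E}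

theorem hasDerivAt_comp_add_smul_of_hasGradientAt {g : E} {t : ℝ}
    (h : HasGradientAt Ψ g (x + t • e)) : HasDerivAt (fun t : ℝ => Ψ (x + t • e)) ⟪g, e⟫ t := by
  have hline : HasDerivAt (fun t : ℝ => x + t • e) e t := by
    simpa using ((hasDerivAt_id t).smul_const e).const_add x
  exact h.hasFDerivAt.comp_hasDerivAt t hline

theorem le_sub_mul_of_forall_inner_le (hΨ : ∀ z, HasGradientAt Ψ (G z) z) {c t : ℝ} (ht : 0 ≤ t)
    (h : ∀ τ ∈ Icc 0 t, ⟪G (y + τ • e), e⟫ ≤ -c) : Ψ (y + t • e) ≤ Ψ y - c * t := by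
  refine le_of_hasDerivAt_le (B := fun τ => Ψ y - c * τ) ht
    (fun τ => hasDerivAt_comp_add_smul_of_hasGradientAt (hΨ _))
    (fun τ => by simpa using ((hasDerivAt_id τ).const_mul c).const_sub (Ψ y)) h (by simp)

theorem le_add_sub_sq_of_forall_inner_le (hΨ : ∀ z, HasGradientAt Ψ (G z) z) {H : E → E →L[ℝ] E}
    (hG : ∀ z, HasFDerivAt G (H z) z) {ε κ t : ℝ} (ht : 0 ≤ t) (hy : ⟪G y, e⟫ ≤ ε)
    (h : ∀ τ ∈ Icc 0 t, ⟪H (y + τ • e) e, e⟫ ≤ -(2 * κ)) :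
    Ψ (y + t • e) ≤ Ψ y + ε * t - κ * t ^ 2 := by
  have hline (τ : ℝ) : HasDerivAt (fun τ : ℝ => y + τ • e) e τ := by
    simpa using ((hasDerivAt_id τ).smul_const e).const_add y
  have slope_le : ∀ τ ∈ Icc 0 t, ⟪G (y + τ • e), e⟫ ≤ ε - 2 * κ * τ := by
    refine fun τ hτ => le_of_hasDerivAt_le (B := fun τ => ε - 2 * κ * τ) hτ.1
      (fun σ => by
        simpa using ((hG _).comp_hasDerivAt σ (hline σ)).inner ℝ (hasDerivAt_const σ e))
      (fun σ => by simpa using ((hasDerivAt_id σ).const_mul (2 * κ)).const_sub ε)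
      (fun σ hσ => h σ ⟨hσ.1, hσ.2.trans hτ.2⟩) (by simpa using hy)
  refine le_of_hasDerivAt_le (B := fun τ => Ψ y + ε * τ - κ * τ ^ 2) ht
    (fun τ => hasDerivAt_comp_add_smul_of_hasGradientAt (hΨ _)) (fun τ => ?_) slope_le (by simp)
  refine ((((hasDerivAt_id τ).const_mul ε).const_add (Ψ y)).fun_sub
    ((hasDerivAt_pow 2 τ).const_mul κ)).congr_deriv ?_
  norm_num
  ring

theorem hasLocalDescent_of_inner_neg {S : Type*} [TopologicalSpace S]
    (hΨ : ∀ z, HasGradientAt Ψ (G z) z) (hG : ContinuousAt G x) {v : E} {R : ℝ} (hv : ‖v‖ ≤ 1)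
    (hGv : ⟪G x, v⟫ < 0) (hx : ‖x‖ < R ∨ ⟪x, v⟫ < 0) :
    HasLocalDescent S (closedBall 0 R) Ψ x := by
  obtain ⟨c, hGc, hc⟩ := exists_between hGv
  have hG_near : ∀ᶠ z in 𝓝 x, ⟪G z, v⟫ < c :=
    (hG.inner continuousAt_const).eventually_lt_const hGc
  have hx_near : ∀ᶠ z in 𝓝 x, ‖z‖ < R ∨ ⟪z, v⟫ < 0 := by
    rcases hx with hx | hx
    · exact (continuousAt_id.norm.eventually_lt_const hx).mono fun z => .inl
    · exact ((continuousAt_id.inner continuousAt_const).eventually_lt_const hx).mono fun z => .inr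
  obtain ⟨ρ, hρ, hnear⟩ := eventually_nhds_iff_ball.1 (hG_near.and hx_near)
  have hr : 0 < ρ / 2 := half_pos hρ
  refine ⟨ρ / 2, hr, -c / (ρ / 2), div_pos (neg_pos.2 hc) hr, fun ε hε D =>
    ⟨.const S v, fun s => ⟨hv, fun hs hsL t ht => ?_⟩⟩⟩
  have hmem : ∀ τ ∈ Icc 0 t, D s + τ • v ∈ ball x ρ := fun τ hτ => by
    simpa [mul_div_cancel₀] using add_smul_mem_ball_two_mul hs hv ⟨hτ.1, hτ.2.trans ht.2⟩
  refine ⟨?_, ?_⟩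
  · rw [mem_closedBall_zero_iff] at hsL ⊢
    rcases (hnear _ (hmem t ⟨ht.1, le_rfl⟩)).2 with h | h
    exacts [h.le, (norm_add_smul_le_of_inner_nonpos ht.1 h.le).trans hsL]
  · have hdecrease := le_sub_mul_of_forall_inner_le hΨ (c := -c) ht.1 fun τ hτ => by
      simpa using (hnear _ (hmem τ hτ)).1.le
    have hquad : -c / (ρ / 2) * t ^ 2 ≤ -c * t := by
      rw [div_mul_eq_mul_div, div_le_iff₀ hr]
      nlinarith [mul_nonneg (mul_nonneg (neg_pos.2 hc).le ht.1) (sub_nonneg.2 ht.2)]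
    simp only [ContinuousMap.const_apply]
    linarith

end Gradient

section Hessian

variable [FiniteDimensional ℝ E] {F : Submodule ℝ E}

theorem exists_forall_inner_le_neg_mul_sq {A : E →L[ℝ] E}
    (hA : ∀ e ∈ F, e ≠ 0 → ⟪A e, e⟫ < 0) : ∃ κ > 0, ∀ e ∈ F, ⟪A e, e⟫ ≤ -κ * ‖e‖ ^ 2 := by
  have hK : IsCompact ((F : Set E) ∩ sphere 0 1) :=
    (isCompact_sphere 0 1).inter_left F.closed_of_finiteDimensional
  obtain ⟨κ, hκ, h⟩ := hK.exists_forall_le' (f := fun e => -⟪A e, e⟫) (a := 0) (by fun_prop)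
    fun e he => neg_pos.2 (hA e he.1 (ne_of_mem_sphere he.2 one_ne_zero))
  refine ⟨κ, hκ, fun e he => ?_⟩
  rcases eq_or_ne e 0 with rfl | he₀
  · simp
  have hunit := h (‖e‖⁻¹ • e) ⟨F.smul_mem _ he, by simp [norm_smul, he₀]⟩
  have hpos : 0 < ‖e‖ ^ 2 := by positivity
  rw [map_smul, real_inner_smul_left, real_inner_smul_right, ← mul_assoc, ← mul_inv, ← sq,
    inv_mul_eq_div, ← neg_div, le_div_iff₀ hpos] at hunit
  linarith

theorem exists_continuousMap_mem_inner_le {m : ℕ} (hF : m < finrank ℝ F)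
    (γ : C(Fin m → unitInterval, E)) {ε : ℝ} (hε : 0 < ε) :
    ∃ u : C(Fin m → unitInterval, E), ∀ s, u s ∈ F ∧ ‖u s‖ = 1 ∧ ⟪γ s, u s⟫ ≤ ε := by
  obtain ⟨γ', hγ'⟩ := exists_continuousMap_ne_zero_norm_sub_le hF
    (ContinuousMap.comp ⟨F.orthogonalProjectionOnto, by fun_prop⟩ γ) hε
  have hcont : Continuous fun s => ‖γ' s‖⁻¹ :=
    γ'.continuous.norm.inv₀ fun s => norm_ne_zero_iff.2 (hγ' s).1
  refine ⟨⟨fun s => -(‖γ' s‖⁻¹ • γ' s : F), by fun_prop⟩, fun s => ?_⟩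
  simp only [ContinuousMap.coe_mk]
  set p := F.orthogonalProjectionOnto (γ s)
  set u := -(‖γ' s‖⁻¹ • γ' s) with hu
  have hunit : ‖u‖ = 1 := by simp [hu, norm_smul, (hγ' s).1]
  have hinner : ⟪γ' s, u⟫ ≤ 0 := by
    rw [hu, inner_neg_right, real_inner_smul_right, neg_nonpos]
    exact mul_nonneg (by positivity) real_inner_self_nonneg
  refine ⟨u.2, hunit, ?_⟩
  calc ⟪γ s, (u : E)⟫ = ⟪p, u⟫ :=
        (Submodule.inner_orthogonalProjectionOnto_eq_of_mem_right u (γ s)).symm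
    _ = ⟪γ' s, u⟫ + ⟪p - γ' s, u⟫ := by rw [inner_sub_left, add_sub_cancel]
    _ ≤ 0 + ‖p - γ' s‖ * ‖u‖ := add_le_add hinner (real_inner_le_norm _ _)
    _ ≤ ε := by rw [hunit, zero_add, mul_one, norm_sub_rev]; exact (hγ' s).2

theorem hasLocalDescent_of_inner_hess_neg {m : ℕ} {Ψ : E → ℝ} {G : E → E} {H : E → E →L[ℝ] E}
    (hΨ : ∀ z, HasGradientAt Ψ (G z) z) (hG : ∀ z, HasFDerivAt G (H z) z) {x : E}
    (hH : ContinuousAt H x) {R : ℝ} (hx : ‖x‖ < R) (hF : m < finrank ℝ F)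
    (hneg : ∀ e ∈ F, e ≠ 0 → ⟪H x e, e⟫ < 0) :
    HasLocalDescent (Fin m → unitInterval) (closedBall 0 R) Ψ x := by
  have hGc : Continuous G := continuous_iff_continuousAt.2 fun z => (hG z).continuousAt
  obtain ⟨κ, hκ, hκF⟩ := exists_forall_inner_le_neg_mul_sq hneg
  have hH_near : ∀ᶠ z in 𝓝 x, ‖H z - H x‖ < κ / 2 := by
    simpa [dist_eq_norm] using Metric.tendsto_nhds.1 hH _ (half_pos hκ)
  obtain ⟨ρ, hρ, hnear⟩ := eventually_nhds_iff_ball.1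
    (hH_near.and (continuousAt_id.norm.eventually_lt_const hx))
  have hr : 0 < ρ / 2 := half_pos hρ
  refine ⟨ρ / 2, hr, κ / 4, by positivity, fun ε hε D => ?_⟩
  obtain ⟨u, hu⟩ := exists_continuousMap_mem_inner_le hF (ContinuousMap.comp ⟨G, hGc⟩ D)
    (div_pos hε hr)
  refine ⟨u, fun s => ⟨(hu s).2.1.le, fun hs _ t ht => ?_⟩⟩
  obtain ⟨huF, hu₁, huG⟩ := hu s
  have hmem : ∀ τ ∈ Icc 0 t, D s + τ • u s ∈ ball x ρ := fun τ hτ => by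
    simpa [mul_div_cancel₀] using add_smul_mem_ball_two_mul hs hu₁.le ⟨hτ.1, hτ.2.trans ht.2⟩
  have hess_le : ∀ τ ∈ Icc 0 t, ⟪H (D s + τ • u s) (u s), u s⟫ ≤ -(2 * (κ / 4)) := by
    intro τ hτ
    have hpert : ⟪(H (D s + τ • u s) - H x) (u s), u s⟫ ≤ κ / 2 := by
      refine (real_inner_le_norm _ _).trans ?_
      rw [hu₁, mul_one]
      exact (ContinuousLinearMap.le_opNorm _ _).trans
        (by rw [hu₁, mul_one]; exact (hnear _ (hmem τ hτ)).1.le)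
    have hx_le := hκF (u s) huF
    rw [sub_apply, inner_sub_left] at hpert
    rw [hu₁] at hx_le
    linarith
  have hdecrease := le_add_sub_sq_of_forall_inner_le hΨ hG ht.1 huG hess_le
  have hε_le : ε / (ρ / 2) * t ≤ ε := by
    rw [div_mul_eq_mul_div, div_le_iff₀ hr]
    exact mul_le_mul_of_nonneg_left ht.2 hε.le
  exact ⟨mem_closedBall_zero_iff.2 (hnear _ (hmem t ⟨ht.1, le_rfl⟩)).2.le, by linarith⟩

end Hessian

end LocalDescent

section GeneralPosition

/-- General position of a family of vectors: any subfamily of cardinality at most the dimension of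
the space is linearly independent. -/
def GeneralPosition {I V : Type*} [AddCommGroup V] [Module ℝ V] (v : I → V) : Prop :=
  ∀ T : Finset I, T.card ≤ finrank ℝ V → LinearIndepOn ℝ v (T : Set I)

namespace GeneralPosition

theorem ne_zero {I V : Type*} [AddCommGroup V] [Module ℝ V] {v : I → V}
    (hv : GeneralPosition v) (hV : 0 < finrank ℝ V) (i : I) : v i ≠ 0 :=
  (hv {i} (by simpa)).ne_zero (by simp)

variable {I E : Type*} [NormedAddCommGroup E] [InnerProductSpace ℝ E]
  [FiniteDimensional ℝ E] {v : I → E}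

theorem eq_zero_of_inner_eq_zero {T : Finset I} (hv : GeneralPosition v)
    (hT : finrank ℝ E ≤ T.card) {x : E} (hx : ∀ i ∈ T, ⟪v i, x⟫ = 0) : x = 0 := by
  obtain ⟨T', hT'T, hT'⟩ := Finset.exists_subset_card_eq hT
  have hspan : Submodule.span ℝ (range fun i : T' => v i) = ⊤ :=
    LinearIndependent.span_eq_top_of_card_eq_finrank' (hv T' hT'.le) (by simpa using hT')
  have hle : Submodule.span ℝ (range fun i : T' => v i) ≤ (ℝ ∙ x)ᗮ := by
    rw [Submodule.span_le]
    rintro _ ⟨i, rfl⟩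
    exact Submodule.mem_orthogonal_singleton_iff_inner_left.2 (hx i (hT'T i.2))
  have hxx : x ∈ (ℝ ∙ x)ᗮ := hle (hspan ▸ Submodule.mem_top)
  simpa using Submodule.mem_orthogonal_singleton_iff_inner_left.1 hxx

variable [Fintype I]

theorem eq_zero_of_sum_smul_eq_zero (hv : GeneralPosition v) {w : I → ℝ} (hw : w ≠ 0)
    (hsum : ∑ i, w i • v i = 0) {x : E} (hx : ∀ i, w i ≠ 0 → ⟪v i, x⟫ = 0) : x = 0 := by
  classical
  set T : Finset I := {i | w i ≠ 0} with hT
  refine hv.eq_zero_of_inner_eq_zero (T := T) (le_of_not_ge fun hcard => hw ?_) (by simpa [hT])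
  have hsumT : ∑ i ∈ T, w i • v i = 0 := by
    rw [← hsum]
    exact Finset.sum_subset (Finset.subset_univ T) fun i _ hi => by simp_all
  funext i
  by_contra hi
  exact hi (linearIndepOn_finset_iff.1 (hv T hcard) w hsumT i (by simpa [hT]))

theorem norm_add_sum_abs_pos (hv : GeneralPosition v) {x : E} (hx : x ≠ 0) {w : I → ℝ}
    (hw : w ≠ 0) : 0 < ‖∑ i, w i • v i‖ + ∑ i, |w i * ⟪v i, x⟫| := by
  refine lt_of_le_of_ne (by positivity) fun h => hx ?_
  obtain ⟨hsum, habs⟩ := (add_eq_zero_iff_of_nonneg (norm_nonneg _)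
    (Finset.sum_nonneg fun _ _ => abs_nonneg _)).1 h.symm
  rw [Finset.sum_eq_zero_iff_of_nonneg fun _ _ => abs_nonneg _] at habs
  exact hv.eq_zero_of_sum_smul_eq_zero hw (norm_eq_zero.1 hsum) fun i hi =>
    (mul_eq_zero.1 (abs_eq_zero.1 (habs i (Finset.mem_univ i)))).resolve_left hi

theorem exists_mul_norm_le (hv : GeneralPosition v) :
    ∃ a > 0, ∀ (x : E) (w : I → ℝ), (∀ i, 0 ≤ w i) →
      a * (‖x‖ * ∑ i, w i) ≤ ‖x‖ * ‖∑ i, w i • v i‖ + ∑ i, |w i * ⟪v i, x⟫| := by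
  set N : E × (I → ℝ) → ℝ := fun z => ‖∑ i, z.2 i • v i‖ + ∑ i, |z.2 i * ⟪v i, z.1⟫| with hN
  have hK : IsCompact (sphere (0 : E) 1 ×ˢ stdSimplex ℝ I) :=
    (isCompact_sphere 0 1).prod (isCompact_stdSimplex ℝ I)
  have hpos : ∀ z ∈ sphere (0 : E) 1 ×ˢ stdSimplex ℝ I, 0 < N z := fun z hz =>
    hv.norm_add_sum_abs_pos (ne_of_mem_sphere hz.1 one_ne_zero) fun h => by
      simpa [h] using hz.2.2
  obtain ⟨a, ha, hle⟩ := hK.exists_forall_le' (f := N) (by fun_prop) hpos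
  refine ⟨a, ha, fun x w hw => ?_⟩
  rcases eq_or_ne x 0 with rfl | hx
  · simp
  rcases (Finset.sum_nonneg fun i _ => hw i).eq_or_lt with hs | hs
  · rw [← hs, mul_zero, mul_zero]
    positivity
  have hx₀ : 0 < ‖x‖ := norm_pos_iff.2 hx
  have hunit := hle (‖x‖⁻¹ • x, (∑ i, w i)⁻¹ • w)
    ⟨by simp [norm_smul, hx], fun i => mul_nonneg (inv_nonneg.2 hs.le) (hw i), by
      simp [← Finset.mul_sum, hs.ne']⟩
  have hscale : N (‖x‖⁻¹ • x, (∑ i, w i)⁻¹ • w) =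
      (‖x‖ * ‖∑ i, w i • v i‖ + ∑ i, |w i * ⟪v i, x⟫|) / (‖x‖ * ∑ i, w i) := by
    simp only [hN, Pi.smul_apply, smul_eq_mul, mul_smul, ← Finset.smul_sum, norm_smul,
      real_inner_smul_right, abs_mul, norm_inv, Real.norm_eq_abs, abs_inv, abs_norm,
      abs_of_pos hs]
    rw [add_div, mul_div_mul_left _ _ hx₀.ne', inv_mul_eq_div, Finset.sum_div]
    congr 1
    exact Finset.sum_congr rfl fun i _ => by field_simp
  rwa [hscale, le_div_iff₀ (by positivity)] at hunit

theorem eventually_not_sameRay (hv : GeneralPosition v) (C : ℝ) :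
    ∀ᶠ x in Bornology.cobounded E, ∀ w : I → ℝ, (∀ i, 0 ≤ w i) → w ≠ 0 →
      (∀ i, w i ≠ 0 → -C ≤ ⟪v i, x⟫) → ¬ SameRay ℝ (∑ i, w i • v i) (-x) := by
  obtain ⟨a, ha, hle⟩ := hv.exists_mul_norm_le
  filter_upwards [tendsto_norm_cobounded_atTop.eventually_gt_atTop (2 * |C| / a)] with
    x hx w hw hw₀ hwx hray
  have hs : 0 < ∑ i, w i :=
    (Finset.sum_nonneg fun i _ => hw i).lt_of_ne' fun h => hw₀ <| funext fun i =>
      (Finset.sum_eq_zero_iff_of_nonneg fun i _ => hw i).1 h i (Finset.mem_univ i)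
  have hinner : ∑ i, w i * ⟪v i, x⟫ = -(‖x‖ * ‖∑ i, w i • v i‖) := by
    have h := inner_eq_norm_mul_iff_real.2 (sameRay_iff_norm_smul_eq.1 hray).symm
    rw [inner_neg_right, norm_neg, sum_inner] at h
    simp only [real_inner_smul_left] at h
    linarith
  have habs : ∀ i, |w i * ⟪v i, x⟫| ≤ w i * ⟪v i, x⟫ + w i * (2 * |C|) := fun i => by
    rcases eq_or_ne (w i) 0 with hi | hi
    · simp [hi]
    · rw [abs_mul, abs_of_nonneg (hw i), ← mul_add]
      refine mul_le_mul_of_nonneg_left (abs_le.2 ⟨?_, ?_⟩) (hw i) <;>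
        linarith [hwx i hi, le_abs_self C, abs_nonneg C]
  have hbound : a * (‖x‖ * ∑ i, w i) ≤ 2 * |C| * ∑ i, w i :=
    calc a * (‖x‖ * ∑ i, w i) ≤ ‖x‖ * ‖∑ i, w i • v i‖ + ∑ i, |w i * ⟪v i, x⟫| := hle x w hw
      _ ≤ ‖x‖ * ‖∑ i, w i • v i‖ + ∑ i, (w i * ⟪v i, x⟫ + w i * (2 * |C|)) := by
        gcongr with i; exact habs i
      _ = 2 * |C| * ∑ i, w i := by
        rw [Finset.sum_add_distrib, hinner, ← Finset.sum_mul]; ring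
  rw [← mul_assoc] at hbound
  rw [div_lt_iff₀ ha] at hx
  linarith [le_of_mul_le_mul_right hbound hs]

end GeneralPosition

end GeneralPosition

theorem hasDerivAt_max_zero_pow (n : ℕ) (s : ℝ) :
    HasDerivAt (fun s : ℝ => max s 0 ^ (n + 2)) ((n + 2) * max s 0 ^ (n + 1)) s := by
  rcases lt_trichotomy s 0 with hs | rfl | hs
  · have hzero : (fun s : ℝ => max s 0 ^ (n + 2)) =ᶠ[𝓝 s] fun _ => 0 := by
      filter_upwards [Iio_mem_nhds hs] with t ht
      simp [max_eq_right (mem_Iio.1 ht).le]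
    simpa [max_eq_right hs.le] using (hasDerivAt_const s (0 : ℝ)).congr_of_eventuallyEq hzero
  · have hO : (fun s : ℝ => max s 0 ^ (n + 2)) =O[𝓝 0] fun s : ℝ => ‖s - 0‖ ^ (n + 2) := by
      refine .of_bound 1 (.of_forall fun t => ?_)
      rw [sub_zero, one_mul, norm_pow, norm_pow, norm_norm, Real.norm_eq_abs, Real.norm_eq_abs,
        abs_of_nonneg (le_max_right t 0)]
      gcongr
      exact max_le (le_abs_self t) (abs_nonneg t)
    simpa using (hO.hasFDerivAt (by omega)).hasDerivAt
  · have hpow : (fun s : ℝ => max s 0 ^ (n + 2)) =ᶠ[𝓝 s] fun s => s ^ (n + 2) := by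
      filter_upwards [Ioi_mem_nhds hs] with t ht
      rw [max_eq_left (mem_Ioi.1 ht).le]
    simpa [max_eq_left hs.le] using (hasDerivAt_pow (n + 2) s).congr_of_eventuallyEq hpow

section Bump

variable {ι E : Type*} [NormedAddCommGroup E] [InnerProductSpace ℝ E]

/-- For a family `p` of affine functions, `p i = (b, a)` standing for `x ↦ ⟪b, x⟫ + a`, the
difference of the functions with indices `i` and `k`. -/
def gap (p : ι → E × ℝ) (i k : ι) (x : E) : ℝ :=
  ⟪(p i).1 - (p k).1, x⟫ + ((p i).2 - (p k).2)

/-- The set of points at which no member of a family of affine functions strictly dominates all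
others; for a finite family this is where the maximum is attained at least twice. -/
def tieLocus (p : ι → E × ℝ) : Set E :=
  {x | ∀ i, ∃ k ≠ i, gap p i k x ≤ 0}

variable {p : ι → E × ℝ} {β : ℝ} {i k : ι} {x : E}

theorem mem_tieLocus : x ∈ tieLocus p ↔ ∀ i, ∃ k ≠ i, gap p i k x ≤ 0 := Iff.rfl

theorem gap_swap : gap p k i x = -gap p i k x := by
  simp only [gap, inner_sub_left]
  ring

@[fun_prop]
theorem continuous_gap : Continuous (gap p i k) := by
  unfold gap
  fun_prop

theorem isClosed_tieLocus [Finite ι] : IsClosed (tieLocus p) := by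
  have h : tieLocus p = ⋂ i, ⋃ k, ⋃ _ : k ≠ i, {x | gap p i k x ≤ 0} := by
    ext x
    simp only [mem_tieLocus, mem_iInter, mem_iUnion, exists_prop, mem_ofPred_eq]
  rw [h]
  exact isClosed_iInter fun i => isClosed_iUnion_of_finite fun k =>
    isClosed_iUnion_of_finite fun _ => isClosed_le continuous_gap continuous_const

theorem convex_setOf_gap_le (c : ℝ) : Convex ℝ {x | gap p i k x ≤ c} :=
  have hconv : ConvexOn ℝ univ (gap p i k) :=
    ((innerSL ℝ ((p i).1 - (p k).1)).toLinearMap.convexOn convex_univ).add_const _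
  by simpa using hconv.convex_le c

theorem hasFDerivAt_exp_gap :
    HasFDerivAt (fun x => Real.exp (-β * gap p i k x))
      (-((β * Real.exp (-β * gap p i k x)) • innerSL ℝ ((p i).1 - (p k).1))) x := by
  have hgap : HasFDerivAt (gap p i k) (innerSL ℝ ((p i).1 - (p k).1)) x :=
    (innerSL ℝ ((p i).1 - (p k).1)).hasFDerivAt.add_const _
  refine (hgap.const_mul (-β)).exp.congr_fderiv ?_
  module

variable [Fintype ι] [DecidableEq ι]

/-- A smooth function that is positive only where the `i`-th affine function strictly dominates the
others, and which tends to `1` there as `β → ∞`. -/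
noncomputable def bump (p : ι → E × ℝ) (β : ℝ) (i : ι) (x : E) : ℝ :=
  1 - ∑ k : {k // k ≠ i}, Real.exp (-β * gap p i k x)

/-- The gradient of `bump p β i`. -/
noncomputable def bumpGrad (p : ι → E × ℝ) (β : ℝ) (i : ι) (x : E) : E :=
  ∑ k : {k // k ≠ i}, (β * Real.exp (-β * gap p i k x)) • ((p i).1 - (p k).1)

/-- The Hessian of `bump p β i`, as a linear endomorphism. -/
noncomputable def bumpHess (p : ι → E × ℝ) (β : ℝ) (i : ι) (x : E) : E →L[ℝ] E :=
  -∑ k : {k // k ≠ i}, (β ^ 2 * Real.exp (-β * gap p i k x)) •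
    (innerSL ℝ ((p i).1 - (p k).1)).smulRight ((p i).1 - (p k).1)

@[fun_prop]
theorem continuous_bump : Continuous (bump p β i) := by
  unfold bump
  fun_prop

@[fun_prop]
theorem continuous_bumpGrad : Continuous (bumpGrad p β i) := by
  unfold bumpGrad
  fun_prop

@[fun_prop]
theorem continuous_bumpHess : Continuous (bumpHess p β i) := by
  unfold bumpHess
  fun_prop

theorem hasFDerivAt_bump : HasFDerivAt (bump p β i) (innerSL ℝ (bumpGrad p β i x)) x := by
  refine ((HasFDerivAt.fun_sum fun k _ => hasFDerivAt_exp_gap).const_sub 1).congr_fderiv ?_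
  simp only [bumpGrad, map_sum, map_smul, Finset.sum_neg_distrib, neg_neg]

theorem hasFDerivAt_bumpGrad : HasFDerivAt (bumpGrad p β i) (bumpHess p β i x) x := by
  refine (HasFDerivAt.fun_sum fun k _ =>
    (hasFDerivAt_exp_gap.const_mul β).smul_const _).congr_fderiv ?_
  rw [bumpHess, ← Finset.sum_neg_distrib]
  refine Finset.sum_congr rfl fun k _ => ContinuousLinearMap.ext fun e => ?_
  simp only [ContinuousLinearMap.smulRight_apply, smul_apply, neg_apply, smul_eq_mul]
  module

theorem inner_bumpHess_self (e : E) :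
    ⟪bumpHess p β i x e, e⟫ = -∑ k : {k // k ≠ i},
      β ^ 2 * Real.exp (-β * gap p i k x) * ⟪(p i).1 - (p k).1, e⟫ ^ 2 := by
  simp only [bumpHess, neg_apply, sum_apply, smul_apply,
    ContinuousLinearMap.smulRight_apply, innerSL_apply_apply, inner_neg_left, sum_inner,
    real_inner_smul_left]
  congr! 2 with k
  ring

theorem gap_pos_of_bump_pos (hβ : 0 < β) (h : 0 < bump p β i x) (hk : k ≠ i) :
    0 < gap p i k x := by
  have hle : Real.exp (-β * gap p i k x) ≤ ∑ k : {k // k ≠ i}, Real.exp (-β * gap p i k x) :=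
    Finset.single_le_sum (f := fun k : {k // k ≠ i} => Real.exp (-β * gap p i k x))
      (fun k _ => (Real.exp_pos _).le) (Finset.mem_univ ⟨k, hk⟩)
  have hexp : Real.exp (-β * gap p i k x) < 1 := by
    unfold bump at h
    linarith
  rw [Real.exp_lt_one_iff, neg_mul, neg_lt_zero] at hexp
  exact pos_of_mul_pos_right hexp hβ.le

theorem eq_of_bump_pos (hβ : 0 < β) (hi : 0 < bump p β i x) (hk : 0 < bump p β k x) : k = i := by
  by_contra hne
  have hik := gap_pos_of_bump_pos hβ hi hne
  have hki := gap_pos_of_bump_pos hβ hk (Ne.symm hne)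
  rw [gap_swap] at hki
  linarith

theorem bump_nonpos_of_mem_tieLocus (hβ : 0 < β) (hx : x ∈ tieLocus p) : bump p β i x ≤ 0 := by
  obtain ⟨k, hk, hgap⟩ := hx i
  by_contra! h
  exact (gap_pos_of_bump_pos hβ h hk).not_ge hgap

theorem tendsto_bump_atTop (h : ∀ k ≠ i, 0 < gap p i k x) :
    Tendsto (fun z : ℝ × E => bump p z.1 i z.2) (atTop ×ˢ 𝓝 x) (𝓝 1) := by
  have hexp (k : {k // k ≠ i}) :
      Tendsto (fun z : ℝ × E => Real.exp (-z.1 * gap p i k z.2)) (atTop ×ˢ 𝓝 x) (𝓝 0) := by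
    refine Real.tendsto_exp_neg_atTop_nhds_zero.comp
      (tendsto_fst.atTop_mul_pos (h k k.2) ((continuous_gap.tendsto x).comp tendsto_snd))
      |>.congr fun z => ?_
    simp only [Function.comp_apply, neg_mul]
  simpa [bump] using (tendsto_finsetSum Finset.univ fun k _ => hexp k).const_sub 1

end Bump

section Arrangement

variable {J : Type*} {ι : J → Type*} {E : Type*} [NormedAddCommGroup E] [InnerProductSpace ℝ E]

theorem isNbhdExtensor_iInter_tieLocus [Finite J] [∀ j, Finite (ι j)] [FiniteDimensional ℝ E]
    {X : Type*} [PseudoEMetricSpace X] (q : ∀ j, ι j → E × ℝ) :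
    IsNbhdExtensor X (⋂ j, tieLocus (q j)) := by
  classical
  let K (f : ∀ j i, {k : ι j // k ≠ i}) : Set E := ⋂ j, ⋂ i, {x | gap (q j) i (f j i) x ≤ 0}
  have := Fintype.ofFinite (∀ j (i : ι j), {k : ι j // k ≠ i})
  have hK : ⋂ j, tieLocus (q j) = ⋃ f ∈ Finset.univ, K f := by
    ext x
    simp only [K, mem_iInter, mem_iUnion, mem_tieLocus, Finset.mem_univ, exists_true_left,
      mem_ofPred_eq]
    refine ⟨fun hx => ?_, fun ⟨f, hf⟩ j i => ⟨f j i, (f j i).2, hf j i⟩⟩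
    choose f hne hf using hx
    exact ⟨fun j i => ⟨f j i, hne j i⟩, hf⟩
  rw [hK]
  exact isNbhdExtensor_biUnion_of_convex _ K
    (fun f => isClosed_iInter fun j => isClosed_iInter fun i =>
      isClosed_le continuous_gap continuous_const)
    fun f => convex_iInter fun j => convex_iInter fun i => convex_setOf_gap_le 0

/-- For a choice `c` of one affine function in each family, the differences of its slope and the
slopes of the other functions in the same family. -/
def slopeDiff (q : ∀ j, ι j → E × ℝ) (c : ∀ j, ι j) (b : Σ j, {k // k ≠ c j}) : E :=
  (q b.1 (c b.1)).1 - (q b.1 b.2).1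

/-- The genericity condition on a collection of families of affine functions: whichever functions
are chosen, their slope differences are in general position. -/
def Generic (q : ∀ j, ι j → E × ℝ) : Prop :=
  ∀ c : ∀ j, ι j, GeneralPosition (slopeDiff q c)

variable [∀ j, Fintype (ι j)] [∀ j, DecidableEq (ι j)] {q : ∀ j, ι j → E × ℝ} {β : ℝ}
  {x : E} {c : ∀ j, ι j}

/-- The choice `c` of one affine function in each family contains all functions whose bump is
positive at `x`. -/
def IsActiveChoice (q : ∀ j, ι j → E × ℝ) (β : ℝ) (x : E) (c : ∀ j, ι j) : Prop :=
  ∀ j, ∀ i ≠ c j, bump (q j) β i x ≤ 0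

theorem exists_isActiveChoice [∀ j, Nonempty (ι j)] (hβ : 0 < β) :
    ∃ c, IsActiveChoice q β x c := by
  have h (j) : ∃ i, ∀ k ≠ i, bump (q j) β k x ≤ 0 := by
    by_cases hpos : ∃ i, 0 < bump (q j) β i x
    · obtain ⟨i, hi⟩ := hpos
      exact ⟨i, fun k hk => not_lt.1 fun h => hk (eq_of_bump_pos hβ hi h)⟩
    · push Not at hpos
      exact ⟨Classical.arbitrary _, fun k _ => hpos k⟩
  choose c hc using h
  exact ⟨c, hc⟩

/-- The coefficients that express `potGrad q β x` as a combination of slope differences. -/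
noncomputable def weight (q : ∀ j, ι j → E × ℝ) (β : ℝ) (x : E) (c : ∀ j, ι j)
    (b : Σ j, {k // k ≠ c j}) : ℝ :=
  3 * max (bump (q b.1) β (c b.1) x) 0 ^ 2 * (β * Real.exp (-β * gap (q b.1) (c b.1) b.2 x))

theorem weight_nonneg (hβ : 0 < β) (b : Σ j, {k // k ≠ c j}) : 0 ≤ weight q β x c b := by
  unfold weight
  positivity

theorem gap_pos_of_weight_ne_zero (hβ : 0 < β) {b : Σ j, {k // k ≠ c j}}
    (h : weight q β x c b ≠ 0) : 0 < gap (q b.1) (c b.1) b.2 x := by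
  refine gap_pos_of_bump_pos hβ (not_le.1 fun hle => h ?_) b.2.2
  simp [weight, max_eq_right hle]

variable [Fintype J]

/-- A `C²` function which vanishes on the intersection of the tie loci, and which is positive for
large `β` at any other given point. -/
noncomputable def pot (q : ∀ j, ι j → E × ℝ) (β : ℝ) (x : E) : ℝ :=
  ∑ j, ∑ i, max (bump (q j) β i x) 0 ^ 3

/-- The gradient of `pot q β`. -/
noncomputable def potGrad (q : ∀ j, ι j → E × ℝ) (β : ℝ) (x : E) : E :=
  ∑ j, ∑ i, (3 * max (bump (q j) β i x) 0 ^ 2) • bumpGrad (q j) β i x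

/-- The Hessian of `pot q β`, as a linear endomorphism. -/
noncomputable def potHess (q : ∀ j, ι j → E × ℝ) (β : ℝ) (x : E) : E →L[ℝ] E :=
  ∑ j, ∑ i, ((3 * max (bump (q j) β i x) 0 ^ 2) • bumpHess (q j) β i x +
    (6 * max (bump (q j) β i x) 0) •
      (innerSL ℝ (bumpGrad (q j) β i x)).smulRight (bumpGrad (q j) β i x))

theorem continuous_potHess : Continuous (potHess q β) := by
  unfold potHess
  fun_prop

theorem hasGradientAt_pot [CompleteSpace E] : HasGradientAt (pot q β) (potGrad q β x) x := by
  refine (HasFDerivAt.fun_sum fun j _ => HasFDerivAt.fun_sum fun i _ =>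
    (hasDerivAt_max_zero_pow 1 _).comp_hasFDerivAt x hasFDerivAt_bump).congr_fderiv ?_
  ext e
  norm_num [potGrad, sum_inner, real_inner_smul_left]

theorem hasFDerivAt_potGrad : HasFDerivAt (potGrad q β) (potHess q β x) x := by
  refine (HasFDerivAt.fun_sum fun j _ => HasFDerivAt.fun_sum fun i _ =>
    (((hasDerivAt_max_zero_pow 0 _).comp_hasFDerivAt x hasFDerivAt_bump).const_mul 3).fun_smul
      hasFDerivAt_bumpGrad).congr_fderiv ?_
  ext e
  simp only [potHess, sum_apply, add_apply, smul_apply, ContinuousLinearMap.smulRight_apply,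
    Function.comp_apply, zero_add, pow_one, smul_eq_mul, CharP.cast_eq_zero]
  congr! 3
  module

theorem le_pot (j : J) (i : ι j) : max (bump (q j) β i x) 0 ^ 3 ≤ pot q β x :=
  (Finset.single_le_sum (f := fun i => max (bump (q j) β i x) 0 ^ 3) (fun _ _ => by positivity)
    (Finset.mem_univ i)).trans <|
  Finset.single_le_sum (f := fun j => ∑ i, max (bump (q j) β i x) 0 ^ 3)
    (fun _ _ => by positivity) (Finset.mem_univ j)

theorem pot_nonpos (h : ∀ j i, bump (q j) β i x ≤ 0) : pot q β x ≤ 0 :=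
  Finset.sum_nonpos fun j _ => Finset.sum_nonpos fun i _ => by simp [max_eq_right (h j i)]

theorem eventually_lt_pot_of_isCompact {K : Set E} (hK : IsCompact K)
    (hKq : Disjoint K (⋂ j, tieLocus (q j))) : ∀ᶠ β in atTop, ∀ x ∈ K, 1 / 8 < pot q β x := by
  have hlocal : ∀ x ∈ K, ∀ᶠ z in atTop ×ˢ 𝓝 x, 1 / 8 < pot q z.1 z.2 := by
    intro x hx
    have hx' := disjoint_left.1 hKq hx
    simp only [mem_iInter, mem_tieLocus, not_forall, not_exists, not_and, not_le] at hx'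
    obtain ⟨j, i, hi⟩ := hx'
    filter_upwards [(tendsto_bump_atTop hi).eventually_const_lt one_half_lt_one] with z hz
    calc (1 / 8 : ℝ) = (1 / 2) ^ 3 := by norm_num
      _ < max (bump (q j) z.1 i z.2) 0 ^ 3 := by gcongr; exact lt_max_of_lt_left hz
      _ ≤ pot q z.1 z.2 := le_pot j i
  exact (Eventually.curry (hK.mem_prod_nhdsSet_of_forall hlocal)).mono fun β hβ =>
    hβ.self_of_nhdsSet

namespace IsActiveChoice

variable (hc : IsActiveChoice q β x c)
include hc

theorem exists_bump_pos (hx : 0 < pot q β x) : ∃ j, 0 < bump (q j) β (c j) x := by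
  by_contra! h
  refine hx.not_ge (pot_nonpos fun j i => ?_)
  rcases eq_or_ne i (c j) with rfl | hi
  exacts [h j, hc j i hi]

theorem weight_ne_zero [∀ j, Nontrivial (ι j)] (hβ : 0 < β) (hx : 0 < pot q β x) :
    weight q β x c ≠ 0 := by
  obtain ⟨j, hj⟩ := hc.exists_bump_pos hx
  obtain ⟨k, hk⟩ := exists_ne (c j)
  refine fun h => (congrFun h ⟨j, k, hk⟩).not_gt ?_
  rw [← max_eq_left_iff.2 hj.le] at hj
  simp only [Pi.zero_apply, weight]
  positivity

theorem potGrad_eq_sum_bumpGrad :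
    potGrad q β x =
      ∑ j, (3 * max (bump (q j) β (c j) x) 0 ^ 2) • bumpGrad (q j) β (c j) x :=
  Finset.sum_congr rfl fun j _ => Fintype.sum_eq_single (c j) fun i hi => by
    simp [max_eq_right (hc j i hi)]

theorem potGrad_eq_sum_slopeDiff :
    potGrad q β x = ∑ b, weight q β x c b • slopeDiff q c b := by
  rw [hc.potGrad_eq_sum_bumpGrad, Fintype.sum_sigma]
  simp only [bumpGrad, Finset.smul_sum, smul_smul, weight, slopeDiff]

theorem inner_potHess_self {e : E} (he : ∀ j, ⟪bumpGrad (q j) β (c j) x, e⟫ = 0) :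
    ⟪potHess q β x e, e⟫ = -(β * ∑ b, weight q β x c b * ⟪slopeDiff q c b, e⟫ ^ 2) := by
  have hsingle (j) : ∑ i, ⟪(3 * max (bump (q j) β i x) 0 ^ 2) • bumpHess (q j) β i x e +
      (6 * max (bump (q j) β i x) 0) •
        (innerSL ℝ (bumpGrad (q j) β i x)).smulRight (bumpGrad (q j) β i x) e, e⟫ =
      3 * max (bump (q j) β (c j) x) 0 ^ 2 * ⟪bumpHess (q j) β (c j) x e, e⟫ := by
    rw [Fintype.sum_eq_single (c j) fun i hi => by simp [max_eq_right (hc j i hi)]]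
    simp [he j, real_inner_smul_left]
  simp only [potHess, sum_apply, add_apply, smul_apply, sum_inner]
  rw [Finset.sum_congr rfl fun j _ => hsingle j, Fintype.sum_sigma, Finset.mul_sum,
    ← Finset.sum_neg_distrib]
  refine Finset.sum_congr rfl fun j _ => ?_
  rw [inner_bumpHess_self, mul_neg, Finset.mul_sum, Finset.mul_sum]
  congr! 2 with k
  simp only [weight, slopeDiff]
  ring

end IsActiveChoice

namespace Generic

variable [FiniteDimensional ℝ E] [∀ j, Nontrivial (ι j)]

theorem eventually_not_sameRay_potGrad (hq : Generic q) :
    ∀ᶠ x in Bornology.cobounded E, ∀ β > 0, 0 < pot q β x → ¬ SameRay ℝ (potGrad q β x) (-x) := by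
  choose C hC using fun c : ∀ j, ι j =>
    (finite_range fun b : Σ j, {k // k ≠ c j} => (q b.1 (c b.1)).2 - (q b.1 b.2).2).bddAbove
  filter_upwards [eventually_all.2 fun c => (hq c).eventually_not_sameRay (C c)] with x hx β hβ hpot
  obtain ⟨c, hc⟩ := exists_isActiveChoice (q := q) (x := x) hβ
  rw [hc.potGrad_eq_sum_slopeDiff]
  refine hx c _ (weight_nonneg hβ) (hc.weight_ne_zero hβ hpot) fun b hb => ?_
  have hgap := gap_pos_of_weight_ne_zero hβ hb
  have hle := hC c ⟨b, rfl⟩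
  simp only [gap] at hgap
  simp only [slopeDiff]
  linarith

theorem exists_inner_potHess_neg (hq : Generic q) (hβ : 0 < β) (hx : 0 < pot q β x)
    (hgrad : potGrad q β x = 0) :
    ∃ F : Submodule ℝ E, finrank ℝ E < finrank ℝ F + Fintype.card J ∧
      ∀ e ∈ F, e ≠ 0 → ⟪potHess q β x e, e⟫ < 0 := by
  obtain ⟨c, hc⟩ := exists_isActiveChoice (q := q) (x := x) hβ
  set g : J → E := fun j => bumpGrad (q j) β (c j) x
  have hdep : finrank ℝ (Submodule.span ℝ (range g)) < Fintype.card J := by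
    refine lt_of_not_ge fun hle => ?_
    have hli : LinearIndependent ℝ g := linearIndependent_iff_card_le_finrank_span.2 hle
    obtain ⟨j, hj⟩ := hc.exists_bump_pos hx
    have hcoeff := Fintype.linearIndependent_iff.1 hli _
      (hc.potGrad_eq_sum_bumpGrad.symm.trans hgrad) j
    rw [max_eq_left hj.le] at hcoeff
    exact (by positivity : 3 * bump (q j) β (c j) x ^ 2 ≠ 0) hcoeff
  refine ⟨(Submodule.span ℝ (range g))ᗮ, ?_, fun e he he₀ => ?_⟩
  · have := (Submodule.span ℝ (range g)).finrank_add_finrank_orthogonal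
    omega
  have horth (j) : ⟪g j, e⟫ = 0 :=
    (Submodule.mem_orthogonal _ _).1 he _ (Submodule.subset_span (mem_range_self j))
  have hterm (b) : 0 ≤ weight q β x c b * ⟪slopeDiff q c b, e⟫ ^ 2 :=
    mul_nonneg (weight_nonneg hβ b) (sq_nonneg _)
  rw [hc.inner_potHess_self horth, neg_lt_zero]
  refine mul_pos hβ ((Finset.sum_nonneg fun b _ => hterm b).lt_of_ne' fun h => he₀ ?_)
  rw [Finset.sum_eq_zero_iff_of_nonneg fun b _ => hterm b] at h
  refine (hq c).eq_zero_of_sum_smul_eq_zero (hc.weight_ne_zero hβ hx)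
    (hc.potGrad_eq_sum_slopeDiff.symm.trans hgrad) fun b hb => ?_
  simpa [hb] using h b (Finset.mem_univ b)

theorem eventually_hasLocalDescent (hq : Generic q) {m : ℕ}
    (hm : m + Fintype.card J ≤ finrank ℝ E) :
    ∀ᶠ R in atTop, ∀ β > 0, ∀ x ∈ closedBall (0 : E) R, 0 < pot q β x →
      HasLocalDescent (Fin m → unitInterval) (closedBall 0 R) (pot q β) x := by
  have hfar := hq.eventually_not_sameRay_potGrad
  rw [← comap_norm_atTop, eventually_comap] at hfar
  filter_upwards [hfar] with R hR β hβ x hx hpot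
  have hG : Continuous (potGrad q β) :=
    continuous_iff_continuousAt.2 fun z => hasFDerivAt_potGrad.continuousAt
  rcases (mem_closedBall_zero_iff.1 hx).lt_or_eq with hlt | heq
  · by_cases hgrad : potGrad q β x = 0
    · obtain ⟨F, hF, hneg⟩ := hq.exists_inner_potHess_neg hβ hpot hgrad
      exact hasLocalDescent_of_inner_hess_neg (fun z => hasGradientAt_pot)
        (fun z => hasFDerivAt_potGrad) continuous_potHess.continuousAt hlt (by omega) hneg
    · obtain ⟨v, hv, hGv, -⟩ := exists_inner_neg_of_not_sameRay
        (mt eq_zero_of_sameRay_self_neg hgrad)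
      exact hasLocalDescent_of_inner_neg (fun z => hasGradientAt_pot) hG.continuousAt hv hGv
        (.inl hlt)
  · obtain ⟨v, hv, hGv, hxv⟩ := exists_inner_neg_of_not_sameRay (hR x heq β hβ hpot)
    exact hasLocalDescent_of_inner_neg (fun z => hasGradientAt_pot) hG.continuousAt hv hGv
      (.inr hxv)

omit [∀ j, Fintype (ι j)] [∀ j, DecidableEq (ι j)] in
theorem exists_continuousMap_mem_iInter_tieLocus [∀ j, Finite (ι j)] (hq : Generic q) {m : ℕ}
    (hm : m + Fintype.card J ≤ finrank ℝ E) (D : C(Fin m → unitInterval, E)) :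
    ∃ D' : C(Fin m → unitInterval, E), ∀ s,
      D' s ∈ ⋂ j, tieLocus (q j) ∧ (D s ∈ ⋂ j, tieLocus (q j) → D' s = D s) := by
  classical
  have := fun j => Fintype.ofFinite (ι j)
  set X := ⋂ j, tieLocus (q j)
  have hXc : IsClosed X := isClosed_iInter fun j => isClosed_tieLocus
  obtain ⟨ρ, hρ, hnear⟩ := isNbhdExtensor_iInter_tieLocus q X id hXc continuousOn_id (mapsTo_id X)
  obtain ⟨W, hW, hXW, hρW⟩ := eventually_nhdsSet_iff_exists.1 hnear
  obtain ⟨R, hdescent, hR⟩ := ((hq.eventually_hasLocalDescent hm).and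
    (eventually_ge_atTop ‖D‖)).exists
  have hD (s) : D s ∈ closedBall (0 : E) R :=
    mem_closedBall_zero_iff.2 ((D.norm_coe_le_norm s).trans hR)
  have hB : IsCompact (closedBall (0 : E) R) := isCompact_closedBall 0 R
  obtain ⟨β, hpot, hβ⟩ := ((eventually_lt_pot_of_isCompact (hB.diff hW)
    (disjoint_sdiff_left.mono_right hXW)).and (eventually_gt_atTop 0)).exists
  obtain ⟨D', hD'⟩ := exists_continuousMap_le_of_hasLocalDescent hB
    (continuous_iff_continuousAt.2 fun x => hasGradientAt_pot.continuousAt) (hdescent β hβ)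
    (by norm_num : (0 : ℝ) < 1 / 8) D hD
  have hD'W (s) : D' s ∈ W := by
    by_contra h
    exact ((hpot (D' s) ⟨(hD' s).1, h⟩).trans_le (hD' s).2.2).false
  refine ⟨⟨fun s => ρ (D' s), continuous_iff_continuousAt.2 fun s =>
    (hρW _ (hD'W s)).1.comp D'.continuous.continuousAt⟩,
    fun s => ⟨(hρW _ (hD'W s)).2, fun hs => ?_⟩⟩
  have hfix : D' s = D s :=
    (hD' s).2.1 (pot_nonpos fun j i => bump_nonpos_of_mem_tieLocus hβ (mem_iInter.1 hs j))
  simpa [hfix] using hρ hs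

end Generic

end Arrangement

section Connectivity

variable {E : Type*} [NormedAddCommGroup E] [NormedSpace ℝ E] {X : Set E}

theorem joined_of_exists_continuousMap
    (h : ∀ D : C(Fin 1 → unitInterval, E), ∃ D' : C(Fin 1 → unitInterval, E),
      ∀ s, D' s ∈ X ∧ (D s ∈ X → D' s = D s)) (x y : X) : Joined x y := by
  obtain ⟨D', hD'⟩ := h ⟨fun s => AffineMap.lineMap (x : E) y (s 0 : ℝ), by fun_prop⟩
  refine ⟨⟨⟨fun t => ⟨D' fun _ => t, (hD' _).1⟩, by fun_prop⟩, ?_, ?_⟩⟩ <;>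
  · refine Subtype.ext (((hD' _).2 ?_).trans ?_) <;> simp

theorem genLoop_homotopic_const_of_exists_continuousMap {k : ℕ}
    (h : ∀ D : C(Fin (k + 1) → unitInterval, E), ∃ D' : C(Fin (k + 1) → unitInterval, E),
      ∀ s, D' s ∈ X ∧ (D s ∈ X → D' s = D s)) {y : X} (f : GenLoop (Fin k) X y) :
    GenLoop.Homotopic f GenLoop.const := by
  obtain ⟨D', hD'⟩ := h ⟨fun s => AffineMap.lineMap (f (Fin.tail s) : E) y (s 0 : ℝ), by
    have : Continuous f := f.1.continuous
    unfold Fin.tail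
    fun_prop⟩
  refine ⟨⟨⟨⟨fun z => ⟨D' (Fin.cons z.1 z.2), (hD' _).1⟩, by fun_prop⟩, fun s => ?_,
    fun s => ?_⟩, fun t s hs => ?_⟩⟩
  · refine Subtype.ext (((hD' (Fin.cons 0 s)).2 ?_).trans ?_) <;> simp
  · refine Subtype.ext (((hD' (Fin.cons 1 s)).2 ?_).trans ?_) <;> simp
  · have hfs : f s = y := f.2 s hs
    refine Subtype.ext (((hD' (Fin.cons t s)).2 ?_).trans ?_)
    · simp [hfs]
    · change _ = (f s : E)
      simp [hfs]

theorem spaceMConnected_of_exists_continuousMap {M : ℕ}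
    (h : ∀ m ≤ M + 1, ∀ D : C(Fin m → unitInterval, E), ∃ D' : C(Fin m → unitInterval, E),
      ∀ s, D' s ∈ X ∧ (D s ∈ X → D' s = D s)) : SpaceMConnected M X := by
  obtain ⟨D', hD'⟩ := h 0 (Nat.zero_le _) (.const _ 0)
  have hne : Nonempty X := ⟨⟨_, (hD' default).1⟩⟩
  refine ⟨hne, ⟨hne, joined_of_exists_continuousMap (h 1 (by omega))⟩, fun k _ hk y => ⟨?_⟩⟩
  have hconst := genLoop_homotopic_const_of_exists_continuousMap (y := y) (h (k + 1) (by omega))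
  exact Quotient.ind₂ fun f g => Quotient.sound ((hconst f).trans (hconst g).symm)

end Connectivity

section AlmostEverywhere

theorem finite_setOf_not_linearIndependent_add_smul {T E : Type*} [Finite T] [AddCommGroup E]
    [Module ℝ E] {u : T → E} (hu : LinearIndependent ℝ u) (v : T → E) :
    {t : ℝ | ¬ LinearIndependent ℝ (v + t • u)}.Finite := by
  classical
  have := Fintype.ofFinite T
  obtain ⟨φ, hφ⟩ := (Fintype.linearCombination ℝ u).exists_leftInverse_of_injective
    (LinearMap.ker_eq_bot.2 <| linearIndependent_iff_injective_fintypeLinearCombination.1 hu)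
  have hφu (i) : φ (u i) = Pi.single i 1 := by
    simpa using LinearMap.congr_fun hφ (Pi.single i 1)
  set M : Matrix T T ℝ := -Matrix.of fun i => φ (v i) with hM
  refine (M.charpoly.roots.toFinset.finite_toSet).subset fun t ht => ?_
  rw [Finset.mem_coe, Multiset.mem_toFinset, Polynomial.mem_roots M.charpoly_monic.ne_zero,
    Polynomial.IsRoot.def, Matrix.eval_charpoly]
  by_contra hdet
  refine ht (LinearIndependent.of_comp φ ?_)
  have hrow : φ ∘ (v + t • u) = fun i => (Matrix.scalar T t - M) i := by
    funext i k
    simp only [Function.comp_apply, Pi.add_apply, Pi.smul_apply, map_add, map_smul, hφu, hM,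
      Matrix.sub_apply, Matrix.neg_apply, Matrix.of_apply, Matrix.scalar_apply,
      Matrix.diagonal_apply, Pi.single_apply, smul_eq_mul]
    split_ifs <;> simp_all [add_comm]
  rw [hrow]
  exact Matrix.linearIndependent_rows_of_det_ne_zero hdet

variable {E P : Type*} [NormedAddCommGroup E] [NormedSpace ℝ E]
  [NormedAddCommGroup P] [NormedSpace ℝ P] [FiniteDimensional ℝ P] [MeasurableSpace P]
  [BorelSpace P] (ν : Measure P) [ν.IsAddHaarMeasure]

theorem ae_linearIndependent {T : Type*} [Finite T] (V : P →ₗ[ℝ] T → E) {p₀ : P}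
    (hp₀ : LinearIndependent ℝ (V p₀)) : ∀ᵐ p ∂ν, LinearIndependent ℝ (V p) := by
  have := Fintype.ofFinite T
  refine ae_mem_of_ae_add_linearMap_mem (s := {p | LinearIndependent ℝ (V p)})
    (LinearMap.toSpanSingleton ℝ P p₀) (volume : Measure ℝ) ν
    (isOpen_setOfPred_linearIndependent.preimage V.continuous_of_finiteDimensional).measurableSet
    fun p => ?_
  filter_upwards [(finite_setOf_not_linearIndependent_add_smul hp₀ (V p)).countable.ae_notMem
    volume] with t ht
  simpa using ht

theorem ae_generalPosition [FiniteDimensional ℝ E] {I : Type*} [Finite I] (V : P →ₗ[ℝ] I → E)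
    (hV : Function.Surjective V) : ∀ᵐ p ∂ν, GeneralPosition (V p) := by
  refine eventually_countable_forall.2 fun T => ?_
  by_cases hT : T.card ≤ finrank ℝ E
  swap
  · exact .of_forall fun p h => absurd h hT
  obtain ⟨σ⟩ : Nonempty ((T : Set I) ↪ Fin (finrank ℝ E)) :=
    Function.Embedding.nonempty_of_card_le (by simpa using hT)
  have hu := (finBasis ℝ E).linearIndependent.comp σ σ.injective
  obtain ⟨p₀, hp₀⟩ := (LinearMap.funLeft_surjective_of_injective ℝ E _
    (Subtype.val_injective (p := (· ∈ (T : Set I))))).comp hV (finBasis ℝ E ∘ σ)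
  rw [← hp₀] at hu
  exact (ae_linearIndependent ν (LinearMap.funLeft ℝ E Subtype.val ∘ₗ V) hu).mono fun p hp _ => hp

theorem ae_generic {J : Type*} [Finite J] {ι : J → Type*} [∀ j, Finite (ι j)]
    {E : Type*} [NormedAddCommGroup E] [InnerProductSpace ℝ E] [FiniteDimensional ℝ E]
    [MeasurableSpace E] [BorelSpace E] (ν : Measure (∀ j, ι j → E × ℝ)) [ν.IsAddHaarMeasure] :
    ∀ᵐ q ∂ν, Generic q := by
  classical
  have := Fintype.ofFinite J
  have := fun j => Fintype.ofFinite (ι j)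
  refine eventually_countable_forall.2 fun c => ?_
  let V : (∀ j, ι j → E × ℝ) →ₗ[ℝ] (Σ j, {k // k ≠ c j}) → E :=
    { toFun := fun q => slopeDiff q c
      map_add' := fun p q => funext fun b => by simp [slopeDiff, add_sub_add_comm]
      map_smul' := fun t q => funext fun b => by simp [slopeDiff, smul_sub] }
  refine ae_generalPosition ν V fun w =>
    ⟨fun j k => if h : k ≠ c j then (-w ⟨j, k, h⟩, 0) else 0, ?_⟩
  funext ⟨j, k, hk⟩
  simp [V, slopeDiff, hk]

theorem ae_volume_generic {J : Type*} [Fintype J] {ι : J → Type*} [∀ j, Fintype (ι j)] {d : ℕ} :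
    ∀ᵐ q ∂(volume : Measure (∀ j, ι j → EuclideanSpace ℝ (Fin d) × ℝ)), Generic q := by
  have : (volume : Measure (EuclideanSpace ℝ (Fin d) × ℝ)).IsAddHaarMeasure :=
    Measure.prod.instIsAddHaarMeasure _ _
  have : ∀ j, (volume : Measure (ι j → EuclideanSpace ℝ (Fin d) × ℝ)).IsAddHaarMeasure :=
    fun j => Measure.pi.isAddHaarMeasure _
  have : (volume : Measure (∀ j, ι j → EuclideanSpace ℝ (Fin d) × ℝ)).IsAddHaarMeasure :=
    Measure.pi.isAddHaarMeasure _
  exact ae_generic (E := EuclideanSpace ℝ (Fin d)) _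

end AlmostEverywhere

section BendLocus

theorem Generic.injective_fst {J : Type*} {ι : J → Type*} [∀ j, Nonempty (ι j)] {E : Type*}
    [NormedAddCommGroup E] [InnerProductSpace ℝ E] {q : ∀ j, ι j → E × ℝ} (hq : Generic q)
    (hE : 0 < finrank ℝ E) (j : J) : Function.Injective fun i => (q j i).1 := by
  classical
  intro i k hik
  by_contra hne
  obtain ⟨c, rfl⟩ : ∃ c : ∀ j, ι j, c j = i :=
    ⟨Function.update (fun _ => Classical.arbitrary _) j i, Function.update_self ..⟩
  exact (hq c).ne_zero hE ⟨j, k, Ne.symm hne⟩ (sub_eq_zero.2 hik)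

variable {d r : ℕ} {b : Fin r → EuclideanSpace ℝ (Fin d)} {a : Fin r → ℝ} {i : Fin r}
  {x : EuclideanSpace ℝ (Fin d)}

theorem le_plMax (i : Fin r) (x : EuclideanSpace ℝ (Fin d)) : ⟪x, b i⟫ + a i ≤ plMax b a x :=
  le_ciSup (f := fun i => ⟪x, b i⟫ + a i) (finite_range _).bddAbove i

theorem plMax_eq_of_forall_le (h : ∀ k, ⟪x, b k⟫ + a k ≤ ⟪x, b i⟫ + a i) :
    plMax b a x = ⟪x, b i⟫ + a i :=
  have : Nonempty (Fin r) := ⟨i⟩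
  le_antisymm (ciSup_le h) (le_plMax i x)

theorem hasFDerivAt_inner_add_const (v x : EuclideanSpace ℝ (Fin d)) (c : ℝ) :
    HasFDerivAt (fun y => ⟪y, v⟫ + c) (innerSL ℝ v) x := by
  simpa [real_inner_comm] using (innerSL ℝ v).hasFDerivAt (x := x) |>.add_const c

theorem notMem_bendLocus (h : ∀ k ≠ i, ⟪x, b k⟫ + a k < ⟪x, b i⟫ + a i) :
    x ∉ bendLocus b a := by
  have hev : ∀ᶠ y in 𝓝 x, ∀ k, ⟪y, b k⟫ + a k ≤ ⟪y, b i⟫ + a i := by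
    refine eventually_all.2 fun k => ?_
    obtain rfl | hk := eq_or_ne k i
    · exact .of_forall fun _ => le_rfl
    · exact (ContinuousAt.eventually_lt (by fun_prop) (by fun_prop) (h k hk)).mono
        fun y hy => hy.le
  have heq : plMax b a =ᶠ[𝓝 x] fun y => ⟪y, b i⟫ + a i :=
    hev.mono fun y hy => plMax_eq_of_forall_le hy
  exact not_not.2 (heq.differentiableAt_iff.2 (hasFDerivAt_inner_add_const _ _ _).differentiableAt)

theorem eq_innerSL_of_hasFDerivAt_plMax {f' : EuclideanSpace ℝ (Fin d) →L[ℝ] ℝ}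
    (hf : HasFDerivAt (plMax b a) f' x) (h : plMax b a x = ⟪x, b i⟫ + a i) :
    f' = innerSL ℝ (b i) := by
  have hmin : IsLocalMin (fun y => plMax b a y - (⟪y, b i⟫ + a i)) x :=
    .of_forall fun y => by simpa only [h, sub_self] using sub_nonneg.2 (le_plMax i y)
  exact sub_eq_zero.1 (hmin.hasFDerivAt_eq_zero (hf.sub (hasFDerivAt_inner_add_const _ _ _)))

theorem bendLocus_eq_tieLocus [Nonempty (Fin r)] {p : Fin r → EuclideanSpace ℝ (Fin d) × ℝ}
    (hp : Function.Injective fun i => (p i).1) :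
    bendLocus (fun i => (p i).1) (fun i => (p i).2) = tieLocus p := by
  have hgap (i k x) : gap p i k x ≤ 0 ↔ ⟪x, (p i).1⟫ + (p i).2 ≤ ⟪x, (p k).1⟫ + (p k).2 := by
    rw [gap, inner_sub_left, real_inner_comm x, real_inner_comm x]
    constructor <;> intro h <;> linarith
  ext x
  simp only [mem_tieLocus, hgap]
  refine ⟨fun hx i => ?_, ?_⟩
  · by_contra! hlt
    exact notMem_bendLocus hlt hx
  · rintro h ⟨f', hf⟩
    obtain ⟨i, hi⟩ := Finite.exists_max fun i => ⟪x, (p i).1⟫ + (p i).2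
    obtain ⟨k, hki, hk⟩ := h i
    have hfi := eq_innerSL_of_hasFDerivAt_plMax hf (plMax_eq_of_forall_le hi)
    have hfk := eq_innerSL_of_hasFDerivAt_plMax hf (plMax_eq_of_forall_le fun l => (hi l).trans hk)
    exact hki (hp ((innerSL_inj (𝕜 := ℝ)).1 (hfk.symm.trans hfi)))

end BendLocus

/-- For Lebesgue-almost-every choice of the coefficient tuples of `n` convex PL functions on
`ℝ^d` (`2 ≤ d`, `1 ≤ n < d`, each a maximum of `r j ≥ 2` affine functions), the complete
intersection of the corresponding bend loci is `(d - n - 1)`-connected. -/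
theorem complete_intersection_connected (d n : ℕ) (hd : 2 ≤ d) (hn : 1 ≤ n) (hnd : n < d)
    (r : Fin n → ℕ) (hr : ∀ j, 2 ≤ r j) :
    ∀ᵐ p ∂(volume : Measure (Π j : Fin n, Fin (r j) → EuclideanSpace ℝ (Fin d) × ℝ)),
      SpaceMConnected (d - n - 1)
        ↥(⋂ j : Fin n, bendLocus (fun i => (p j i).1) (fun i => (p j i).2)) := by
  have : ∀ j, Nontrivial (Fin (r j)) := fun j => Fin.nontrivial_iff_two_le.2 (hr j)
  filter_upwards [ae_volume_generic] with p hp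
  have hd₀ : 0 < finrank ℝ (EuclideanSpace ℝ (Fin d)) := by
    rw [finrank_euclideanSpace_fin]
    omega
  rw [iInter_congr fun j => bendLocus_eq_tieLocus (hp.injective_fst hd₀ j)]
  refine spaceMConnected_of_exists_continuousMap fun m hm =>
    hp.exists_continuousMap_mem_iInter_tieLocus ?_
  rw [Fintype.card_fin, finrank_euclideanSpace_fin]
  omega
end

section
/- Let X be a topological space and let Y be obtained from X by attaching cells of dimension at least m+2 (m ≥ 0); that is, Y is the pushout of X along attaching maps from spheres ∂D^{n_α} of the boundaries of disks D^{n_α} with n_α ≥ m+2 for all α. If Y is (m+1)-connected and X is nonempty, then X is m-connected. -/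
universe u

/-- The unit disk `D^n ⊆ ℝ^n`. -/
def unitDisk (n : ℕ) : Set (EuclideanSpace ℝ (Fin n)) := Metric.closedBall 0 1

/-- The boundary sphere `S^{n-1} = ∂D^n ⊆ ℝ^n`. -/
def unitSphere (n : ℕ) : Set (EuclideanSpace ℝ (Fin n)) := Metric.sphere 0 1

/-!
Deforming a map `H : T → Y` from a low-dimensional space `T` off the centres of the cells and then
projecting each cell radially to its boundary gives a map `T → X` which agrees with `H` wherever `H`
already lies in `X`. If every cell has dimension at least `m + 2`, this applies to paths and to
homotopies between `k`-loops for `k ≤ m`, so a path or homotopy in `Y` between points or loops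
of `X` can be replaced by one in `X`.

The pushout is known only through maps out of it, so the radial projection is made total: it sends
the centres to an extra point `∞` whose only neighbourhood is the whole space. For such a target,
continuity need only be checked away from the centres.
-/

open Topology Set Module

section GeneralPosition

variable {T E F : Type*} [TopologicalSpace T]
  [NormedAddCommGroup E] [NormedSpace ℝ E] [FiniteDimensional ℝ E]
  [NormedAddCommGroup F] [NormedSpace ℝ F] [FiniteDimensional ℝ F]

theorem exists_forall_ne_zero_dist_lt {e : T → E} (he : IsClosedEmbedding e)
    (hdim : finrank ℝ E < finrank ℝ F) (f : C(T, F)) {ε : ℝ} (hε : 0 < ε) :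
    ∃ g : C(T, F), (∀ t, g t ≠ 0) ∧ ∀ t, dist (g t) (f t) < ε := by
  have : TietzeExtension F := .of_tvs ℝ
  obtain ⟨f', hf'⟩ := f.exists_extension' he
  obtain ⟨g, hg, hgf, -⟩ := f'.continuous.exists_contDiff_approx 1 continuous_const
    fun _ ↦ half_pos hε
  -- The `C¹` map `g` raises dimension, so its range omits arbitrarily small vectors.
  obtain ⟨p, hp, hpε⟩ := (hg.dense_compl_range_of_finrank_lt_finrank hdim).exists_dist_lt 0
    (half_pos hε)
  have hgcont : Continuous fun t ↦ g (e t) - p :=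
    (hg.continuous.comp he.continuous).sub continuous_const
  refine ⟨⟨_, hgcont⟩, fun t ↦ sub_ne_zero.2 fun h ↦ hp ⟨e t, h⟩, fun t ↦ ?_⟩
  calc dist (g (e t) - p) (f t)
      ≤ dist (g (e t) - p) (g (e t)) + dist (g (e t)) (f t) := dist_triangle _ _ _
    _ = dist 0 p + dist (g (e t)) (f' (e t)) := by simp [← hf']
    _ < ε / 2 + ε / 2 := add_lt_add hpε (hgf _)
    _ = ε := add_halves ε

theorem exists_forall_ne_zero_eq_of_le_norm {e : T → E} (he : IsClosedEmbedding e)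
    (hdim : finrank ℝ E < finrank ℝ F) (f : C(T, F)) {δ : ℝ} (hδ : 0 < δ) :
    ∃ h : C(T, F), (∀ t, h t ≠ 0) ∧ ∀ t, δ ≤ ‖f t‖ → h t = f t := by
  obtain ⟨g, hg, hgf⟩ := exists_forall_ne_zero_dist_lt he hdim f (half_pos hδ)
  let c : ContDiffBump (0 : F) := ⟨δ / 2, δ, half_pos hδ, half_lt_self hδ⟩
  have hcont : Continuous fun t ↦ f t + c (f t) • (g t - f t) :=
    f.continuous.add ((c.continuous.comp f.continuous).smul (g.continuous.sub f.continuous))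
  refine ⟨⟨_, hcont⟩, fun t ↦ ?_, fun t ht ↦ ?_⟩
  · rcases le_or_gt ‖f t‖ (δ / 2) with hsmall | hlarge
    · have hc : c (f t) = 1 := c.one_of_mem_closedBall (mem_closedBall_zero_iff.2 hsmall)
      simpa [hc] using hg t
    · have hlt : ‖c (f t) • (g t - f t)‖ < ‖f t‖ :=
        calc ‖c (f t) • (g t - f t)‖ = c (f t) * dist (g t) (f t) := by
              rw [norm_smul, Real.norm_of_nonneg c.nonneg, dist_eq_norm]
          _ ≤ dist (g t) (f t) := mul_le_of_le_one_left dist_nonneg c.le_one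
          _ < ‖f t‖ := (hgf t).trans hlarge
      intro h0
      exact hlt.ne' (by rw [← norm_neg, neg_eq_of_add_eq_zero_right h0])
  · have hc : c (f t) = 0 := c.zero_of_le_dist (by simpa using ht)
    simp [hc]

end GeneralPosition

/-- The space `X` with an extra point `∞` whose only neighbourhood is the whole space. Continuous
maps `Z → OpenExtension X` correspond to continuous maps to `X` defined on open subsets of `Z`. -/
def OpenExtension (X : Type*) := Option X

namespace OpenExtension

variable {X Z : Type*}

/-- The inclusion of `X` in its open extension. -/
def incl (x : X) : OpenExtension X := some x

/-- The extra point of the open extension. -/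
def infty : OpenExtension X := none

theorem incl_injective : Function.Injective (incl : X → OpenExtension X) := Option.some_injective X

theorem incl_ne_infty (x : X) : incl x ≠ infty := Option.some_ne_none x

theorem exists_incl_eq {p : OpenExtension X} (hp : p ≠ infty) : ∃ x, incl x = p :=
  Option.ne_none_iff_exists.1 hp

variable [TopologicalSpace X] [TopologicalSpace Z]

instance : TopologicalSpace (OpenExtension X) where
  IsOpen s := IsOpen (incl ⁻¹' s) ∧ (infty ∈ s → s = univ)
  isOpen_univ := ⟨isOpen_univ, fun _ ↦ rfl⟩
  isOpen_inter s t hs ht := ⟨hs.1.inter ht.1, fun h ↦ by rw [hs.2 h.1, ht.2 h.2, univ_inter]⟩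
  isOpen_sUnion S hS := by
    refine ⟨?_, fun ⟨s, hs, h⟩ ↦ univ_subset_iff.1 ((hS s hs).2 h ▸ subset_sUnion_of_mem hs)⟩
    rw [preimage_sUnion]
    exact isOpen_biUnion fun s hs ↦ (hS s hs).1

theorem isOpen_iff {s : Set (OpenExtension X)} :
    IsOpen s ↔ IsOpen (incl ⁻¹' s) ∧ (infty ∈ s → s = univ) := Iff.rfl

theorem isOpenEmbedding_incl : IsOpenEmbedding (incl : X → OpenExtension X) := by
  refine .of_continuous_injective_isOpenMap
    ⟨fun s hs ↦ (isOpen_iff.1 hs).1⟩ incl_injective fun s hs ↦ isOpen_iff.2 ⟨?_, ?_⟩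
  · rwa [preimage_image_eq _ incl_injective]
  · rintro ⟨x, -, hx⟩
    exact (incl_ne_infty x hx).elim

/-- The total map `Z → OpenExtension X` given by a map to `X` on the open set `U` and by `infty`
elsewhere. -/
noncomputable def extend {U : Set Z} (hU : IsOpen U) (f : C(U, X)) : C(Z, OpenExtension X) where
  toFun := Function.extend (↑) (incl ∘ f) fun _ ↦ infty
  continuous_toFun := by
    refine ⟨fun s hs ↦ ?_⟩
    by_cases h : infty ∈ s
    · rw [(isOpen_iff.1 hs).2 h]
      exact isOpen_univ
    · convert hU.isOpenMap_subtype_val _ (hs.preimage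
        (isOpenEmbedding_incl.continuous.comp f.continuous)) using 1
      ext z
      by_cases hz : z ∈ U
      · lift z to U using hz
        simp
      · simp [Function.extend_apply', hz, h]

theorem extend_apply_of_mem {U : Set Z} (hU : IsOpen U) (f : C(U, X)) {z : Z} (hz : z ∈ U) :
    extend hU f z = incl (f ⟨z, hz⟩) :=
  Subtype.val_injective.extend_apply (incl ∘ f) (fun _ ↦ infty) ⟨z, hz⟩

theorem exists_lift (f : C(Z, OpenExtension X)) (hf : ∀ z, f z ≠ infty) :
    ∃ g : C(Z, X), ∀ z, incl (g z) = f z := by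
  choose g hg using fun z ↦ exists_incl_eq (hf z)
  have hcomp : incl ∘ g = f := funext hg
  exact ⟨⟨g, isOpenEmbedding_incl.continuous_iff.2 (hcomp ▸ f.continuous)⟩, hg⟩

end OpenExtension

section Disk

variable {n : ℕ} {X : Type*} [TopologicalSpace X]

theorem norm_eq_one_of_mem_unitSphere {v : EuclideanSpace ℝ (Fin n)} (hv : v ∈ unitSphere n) :
    ‖v‖ = 1 :=
  mem_sphere_zero_iff_norm.1 hv

theorem ne_zero_of_mem_unitSphere {v : EuclideanSpace ℝ (Fin n)} (hv : v ∈ unitSphere n) :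
    v ≠ 0 :=
  ne_zero_of_mem_unit_sphere (⟨v, hv⟩ : Metric.sphere (0 : EuclideanSpace ℝ (Fin n)) 1)

/-- The radial projection `v ↦ v / ‖v‖` of the nonzero vectors to the unit sphere. -/
noncomputable def radialProjection (n : ℕ) :
    C(({0}ᶜ : Set (EuclideanSpace ℝ (Fin n))), unitSphere n) :=
  ⟨fun v ↦ (homeomorphUnitSphereProd _ v).1,
    continuous_fst.comp (homeomorphUnitSphereProd _).continuous⟩

theorem radialProjection_of_mem_unitSphere {v : EuclideanSpace ℝ (Fin n)} (hv : v ∈ unitSphere n) :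
    radialProjection n ⟨v, ne_zero_of_mem_unitSphere hv⟩ = ⟨v, hv⟩ :=
  Subtype.ext <| (homeomorphUnitSphereProd_apply_fst_coe _ _).trans <| by
    simp [norm_eq_one_of_mem_unitSphere hv]

/-- The extension of a map from the sphere to the disk which is constant on radii, with the centre
sent to `infty`. -/
noncomputable def radialExtension (φ : C(unitSphere n, X)) : C(unitDisk n, OpenExtension X) :=
  OpenExtension.extend (U := {z | z.1 ≠ 0}) (isOpen_ne_fun continuous_subtype_val continuous_const)
    (φ.comp ((radialProjection n).comp
      ⟨fun z ↦ ⟨z.1.1, z.2⟩, by fun_prop⟩))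

theorem radialExtension_of_ne_zero (φ : C(unitSphere n, X)) {z : unitDisk n} (hz : z.1 ≠ 0) :
    radialExtension φ z = .incl (φ (radialProjection n ⟨z.1, hz⟩)) :=
  OpenExtension.extend_apply_of_mem (U := {z : unitDisk n | z.1 ≠ 0}) _ _ hz

end Disk

/-- `Y` is the pushout of `X` and the disks `unitDisk (ncell α)` along the attaching maps `φ α`,
with structure maps `i` and `Φ α`. -/
structure IsCellAttachment {X Y ι : Type u} [TopologicalSpace X] [TopologicalSpace Y]
    {ncell : ι → ℕ} (φ : ∀ α, C(unitSphere (ncell α), X)) (i : C(X, Y))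
    (Φ : ∀ α, C(unitDisk (ncell α), Y)) : Prop where
  comm : ∀ α (z : unitSphere (ncell α)),
    Φ α ⟨z.1, Metric.sphere_subset_closedBall z.2⟩ = i (φ α z)
  existsUnique_desc : ∀ (Z : Type u) [TopologicalSpace Z] (g : C(X, Z))
    (h : ∀ α, C(unitDisk (ncell α), Z)),
    (∀ α (z : unitSphere (ncell α)),
      h α ⟨z.1, Metric.sphere_subset_closedBall z.2⟩ = g (φ α z)) →
    ∃! k : C(Y, Z), k.comp i = g ∧ ∀ α, k.comp (Φ α) = h α

namespace IsCellAttachment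

variable {X Y ι : Type u} [TopologicalSpace X] [TopologicalSpace Y] {ncell : ι → ℕ}
  {φ : ∀ α, C(unitSphere (ncell α), X)} {i : C(X, Y)} {Φ : ∀ α, C(unitDisk (ncell α), Y)}

section Desc

variable {Z : Type*} [TopologicalSpace Z] [Small.{u} Z]

theorem exists_desc (hY : IsCellAttachment φ i Φ) (g : C(X, Z)) (h : ∀ α, C(unitDisk (ncell α), Z))
    (hgh : ∀ α (z : unitDisk (ncell α)) (hz : z.1 ∈ unitSphere (ncell α)),
      h α z = g (φ α ⟨z.1, hz⟩)) :
    ∃ k : C(Y, Z), (∀ x, k (i x) = g x) ∧ ∀ α z, k (Φ α z) = h α z := by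
  let e : Z ≃ₜ Shrink.{u} Z := Shrink.homeomorph Z
  let e' : C(Z, Shrink.{u} Z) := e
  obtain ⟨k, ⟨hkg, hkh⟩, -⟩ := hY.existsUnique_desc (Shrink.{u} Z) (e'.comp g)
    (fun α ↦ e'.comp (h α))
    fun α z ↦ congrArg e (hgh α ⟨z.1, Metric.sphere_subset_closedBall z.2⟩ z.2)
  exact ⟨⟨fun y ↦ e.symm (k y), e.symm.continuous.comp k.continuous⟩,
    fun x ↦ e.symm_apply_eq.2 (DFunLike.congr_fun hkg x),
    fun α z ↦ e.symm_apply_eq.2 (DFunLike.congr_fun (hkh α) z)⟩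

variable (hY : IsCellAttachment φ i Φ)

/-- The map out of the cell attachment given by compatible maps on the base and on the cells. -/
noncomputable def desc (g : C(X, Z)) (h : ∀ α, C(unitDisk (ncell α), Z))
    (hgh : ∀ α (z : unitDisk (ncell α)) (hz : z.1 ∈ unitSphere (ncell α)),
      h α z = g (φ α ⟨z.1, hz⟩)) : C(Y, Z) :=
  (hY.exists_desc g h hgh).choose

variable {g : C(X, Z)} {h : ∀ α, C(unitDisk (ncell α), Z)}
  {hgh : ∀ α (z : unitDisk (ncell α)) (hz : z.1 ∈ unitSphere (ncell α)),
    h α z = g (φ α ⟨z.1, hz⟩)}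

theorem desc_base (x : X) : hY.desc g h hgh (i x) = g x :=
  (hY.exists_desc g h hgh).choose_spec.1 x

theorem desc_cell (α : ι) (z : unitDisk (ncell α)) : hY.desc g h hgh (Φ α z) = h α z :=
  (hY.exists_desc g h hgh).choose_spec.2 α z

open Classical in
/-- The map out of the cell attachment given by `f` on the cell `α` and constant elsewhere. -/
noncomputable def descSingle (α : ι) (c : Z) (f : C(unitDisk (ncell α), Z))
    (hf : ∀ z, z.1 ∈ unitSphere (ncell α) → f z = c) : C(Y, Z) :=
  hY.desc (.const X c) (Function.update (fun β ↦ .const (unitDisk (ncell β)) c) α f)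
    fun β z hz ↦ by
      rcases eq_or_ne β α with rfl | h
      · simpa using hf z hz
      · simp [h]

variable {α : ι} {c : Z} {f : C(unitDisk (ncell α), Z)}
  {hf : ∀ z, z.1 ∈ unitSphere (ncell α) → f z = c}

theorem descSingle_base (x : X) : hY.descSingle α c f hf (i x) = c :=
  hY.desc_base x

theorem descSingle_cell (z : unitDisk (ncell α)) : hY.descSingle α c f hf (Φ α z) = f z := by
  simp [descSingle, desc_cell]

theorem descSingle_cell_of_ne {β : ι} (hβ : β ≠ α) (z : unitDisk (ncell β)) :
    hY.descSingle α c f hf (Φ β z) = c := by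
  simp [descSingle, desc_cell, hβ]

end Desc

theorem induction_on (hY : IsCellAttachment φ i Φ) {p : Y → Prop} (base : ∀ x, p (i x))
    (cell : ∀ α z, p (Φ α z)) (y : Y) : p y := by
  -- Into an indiscrete space every map is continuous, so `p` and `True` agree by uniqueness.
  let _ : TopologicalSpace (ULift.{u} Prop) := ⊤
  let k₁ : C(Y, ULift.{u} Prop) := ⟨fun y ↦ ⟨p y⟩, continuous_top⟩
  let k₂ : C(Y, ULift.{u} Prop) := ⟨fun _ ↦ ⟨True⟩, continuous_top⟩
  have hk : k₁ = k₂ :=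
    (hY.existsUnique_desc (ULift.{u} Prop) (k₂.comp i) (fun α ↦ k₂.comp (Φ α))
      fun _ _ ↦ rfl).unique
      ⟨ContinuousMap.ext fun x ↦ congrArg ULift.up (eq_true (base x)),
        fun α ↦ ContinuousMap.ext fun z ↦ congrArg ULift.up (eq_true (cell α z))⟩
      ⟨rfl, fun _ ↦ rfl⟩
  exact of_eq_true (congrArg ULift.down (DFunLike.congr_fun hk y))

theorem nonempty_base (hY : IsCellAttachment φ i Φ) (hdim : ∀ α, 0 < ncell α) [hne : Nonempty Y] :
    Nonempty X := by
  refine hne.elim (hY.induction_on (fun x ↦ ⟨x⟩) fun α _ ↦ ?_)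
  have : NeZero (ncell α) := .of_pos (hdim α)
  exact ⟨φ α ⟨EuclideanSpace.single 0 1, by simp [unitSphere]⟩⟩

/-- The distance to the centre on every cell, equal to `1` on the base. -/
noncomputable def radius (hY : IsCellAttachment φ i Φ) : C(Y, ℝ) :=
  hY.desc (.const X 1) (fun _ ↦ ⟨fun z ↦ ‖z.1‖, by fun_prop⟩)
    fun _ _ hz ↦ norm_eq_one_of_mem_unitSphere hz

theorem radius_base (hY : IsCellAttachment φ i Φ) (x : X) : hY.radius (i x) = 1 :=
  hY.desc_base x

theorem radius_cell (hY : IsCellAttachment φ i Φ) (α : ι) (z : unitDisk (ncell α)) :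
    hY.radius (Φ α z) = ‖z.1‖ :=
  hY.desc_cell α z

theorem exists_retraction (hY : IsCellAttachment φ i Φ) :
    ∃ ρ : C({y | hY.radius y ≠ 0}, X), (∀ y x, y.1 = i x → ρ y = x) ∧
      ∀ y α (z : unitDisk (ncell α)) (hz : z.1 ≠ 0), y.1 = Φ α z →
        ρ y = φ α (radialProjection _ ⟨z.1, hz⟩) := by
  let k : C(Y, OpenExtension X) :=
    hY.desc ⟨OpenExtension.incl, OpenExtension.isOpenEmbedding_incl.continuous⟩
      (fun α ↦ radialExtension (φ α)) fun α z hz ↦ by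
        rw [radialExtension_of_ne_zero _ (ne_zero_of_mem_unitSphere hz),
          radialProjection_of_mem_unitSphere hz]
        rfl
  have hkbase : ∀ x, k (i x) = .incl x := hY.desc_base
  have hkcell : ∀ α (z : unitDisk (ncell α)) (hz : z.1 ≠ 0),
      k (Φ α z) = .incl (φ α (radialProjection _ ⟨z.1, hz⟩)) := fun α z hz ↦
    (hY.desc_cell α z).trans (radialExtension_of_ne_zero _ hz)
  have hk : ∀ y, hY.radius y ≠ 0 → k y ≠ .infty := by
    refine hY.induction_on (fun x _ ↦ ?_) fun α z hz ↦ ?_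
    · exact hkbase x ▸ OpenExtension.incl_ne_infty x
    · rw [radius_cell, norm_ne_zero_iff] at hz
      exact hkcell α z hz ▸ OpenExtension.incl_ne_infty _
  obtain ⟨ρ, hρ⟩ := OpenExtension.exists_lift (k.restrict {y | hY.radius y ≠ 0})
    fun y ↦ hk y.1 y.2
  refine ⟨ρ, fun y x hy ↦ OpenExtension.incl_injective ?_,
    fun y α z hz hy ↦ OpenExtension.incl_injective ?_⟩
  · rw [hρ, ContinuousMap.restrict_apply, hy, hkbase]
  · rw [hρ, ContinuousMap.restrict_apply, hy, hkcell α z hz]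

/-- The neighbourhood of the base which omits the closed disk of radius `1 / 2` in every cell. -/
def collar (hY : IsCellAttachment φ i Φ) : Set Y := {y | 1 / 2 < hY.radius y}

/-- The open disk of radius `3 / 4` in the cell `α`, cut out by the function that is the distance to
the centre on this cell and `1` elsewhere. The collar and the cores overlap in annuli. -/
def core (hY : IsCellAttachment φ i Φ) (α : ι) : Set Y :=
  {y | hY.descSingle α (1 : ℝ) ⟨fun z ↦ ‖z.1‖, by fun_prop⟩
    (fun _ hz ↦ norm_eq_one_of_mem_unitSphere hz) y < 3 / 4}

theorem isOpen_collar (hY : IsCellAttachment φ i Φ) : IsOpen hY.collar :=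
  isOpen_lt continuous_const hY.radius.continuous

theorem isOpen_core (hY : IsCellAttachment φ i Φ) (α : ι) : IsOpen (hY.core α) :=
  isOpen_lt (ContinuousMap.continuous _) continuous_const

theorem base_mem_collar (hY : IsCellAttachment φ i Φ) (x : X) : i x ∈ hY.collar := by
  norm_num [collar, radius_base]

theorem cell_mem_collar_iff (hY : IsCellAttachment φ i Φ) {α : ι} {z : unitDisk (ncell α)} :
    Φ α z ∈ hY.collar ↔ 1 / 2 < ‖z.1‖ := by
  rw [collar, mem_ofPred_eq, radius_cell]

theorem cell_mem_core_iff (hY : IsCellAttachment φ i Φ) {α : ι} {z : unitDisk (ncell α)} :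
    Φ α z ∈ hY.core α ↔ ‖z.1‖ < 3 / 4 := by
  rw [core, mem_ofPred_eq, descSingle_cell, ContinuousMap.coe_mk]

theorem base_notMem_core (hY : IsCellAttachment φ i Φ) (x : X) (α : ι) : i x ∉ hY.core α := by
  norm_num [core, descSingle_base]

theorem cell_notMem_core_of_ne (hY : IsCellAttachment φ i Φ) {α β : ι} (hβ : β ≠ α)
    (z : unitDisk (ncell β)) : Φ β z ∉ hY.core α := by
  norm_num [core, descSingle_cell_of_ne _ hβ]

theorem exists_eq_of_mem_core (hY : IsCellAttachment φ i Φ) {α : ι} {y : Y} :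
    y ∈ hY.core α → ∃ z, Φ α z = y :=
  hY.induction_on (p := fun y ↦ y ∈ hY.core α → ∃ z, Φ α z = y)
    (fun x hx ↦ (hY.base_notMem_core x α hx).elim)
    (fun β z hz ↦ by
      obtain rfl : β = α := by_contra fun hβ ↦ hY.cell_notMem_core_of_ne hβ z hz
      exact ⟨z, rfl⟩) y

theorem eq_of_mem_core_of_mem_core (hY : IsCellAttachment φ i Φ) {α β : ι} {y : Y}
    (hα : y ∈ hY.core α) (hβ : y ∈ hY.core β) : α = β := by
  obtain ⟨z, rfl⟩ := hY.exists_eq_of_mem_core hα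
  exact by_contra fun h ↦ hY.cell_notMem_core_of_ne h z hβ

theorem mem_collar_or_exists_mem_core (hY : IsCellAttachment φ i Φ) :
    ∀ y, y ∈ hY.collar ∨ ∃ α, y ∈ hY.core α := by
  refine hY.induction_on (fun x ↦ .inl (hY.base_mem_collar x)) fun α z ↦ ?_
  rcases lt_or_ge (1 / 2) ‖z.1‖ with hz | hz
  · exact .inl (hY.cell_mem_collar_iff.2 hz)
  · exact .inr ⟨α, hY.cell_mem_core_iff.2 (by linarith)⟩

/-- A coordinate on the cell `α`, scaled down near the boundary so as to vanish elsewhere. -/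
noncomputable def cellCoord (hY : IsCellAttachment φ i Φ) (α : ι) :
    C(Y, EuclideanSpace ℝ (Fin (ncell α))) :=
  let c : ContDiffBump (0 : EuclideanSpace ℝ (Fin (ncell α))) :=
    ⟨3 / 4, 1, by norm_num, by norm_num⟩
  hY.descSingle α 0 ⟨fun z ↦ c z.1 • z.1,
      (c.continuous.comp continuous_subtype_val).smul continuous_subtype_val⟩ fun z hz ↦
    smul_eq_zero_of_left (c.zero_of_le_dist (by simp [c, norm_eq_one_of_mem_unitSphere hz])) _

theorem cellCoord_cell (hY : IsCellAttachment φ i Φ) {α : ι} {z : unitDisk (ncell α)}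
    (hz : ‖z.1‖ ≤ 3 / 4) : hY.cellCoord α (Φ α z) = z.1 := by
  rw [cellCoord, descSingle_cell, ContinuousMap.coe_mk, ContDiffBump.one_of_mem_closedBall,
    one_smul]
  exact mem_closedBall_zero_iff.2 hz

section Compression

variable {T E : Type*} [TopologicalSpace T]
  [NormedAddCommGroup E] [NormedSpace ℝ E] [FiniteDimensional ℝ E]

theorem exists_push_core (hY : IsCellAttachment φ i Φ) {e : T → E} (he : IsClosedEmbedding e)
    {α : ι} (hdim : finrank ℝ E < ncell α) (H : C(T, Y)) :
    ∃ u : C(T, X), ∀ t (z : unitDisk (ncell α)) (hz : z.1 ≠ 0), H t = Φ α z →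
      H t ∈ hY.collar → H t ∈ hY.core α → u t = φ α (radialProjection _ ⟨z.1, hz⟩) := by
  obtain ⟨v, hv0, hv⟩ := exists_forall_ne_zero_eq_of_le_norm he (by simpa using hdim)
    ((hY.cellCoord α).comp H) (δ := 1 / 2) (by norm_num)
  refine ⟨(φ α).comp ((radialProjection _).comp ⟨fun t ↦ ⟨v t, hv0 t⟩, by fun_prop⟩),
    fun t z hz hHz hcollar hcore ↦ ?_⟩
  rw [hHz, cell_mem_collar_iff] at hcollar
  rw [hHz, cell_mem_core_iff] at hcore
  have hcoord : (hY.cellCoord α).comp H t = z.1 := by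
    rw [ContinuousMap.comp_apply, hHz, hY.cellCoord_cell hcore.le]
  have hvz : v t = z.1 := (hv t (hcoord ▸ hcollar.le)).trans hcoord
  simp [hvz]

theorem exists_compression (hY : IsCellAttachment φ i Φ) {e : T → E} (he : IsClosedEmbedding e)
    (hdim : ∀ α, finrank ℝ E < ncell α) (H : C(T, Y)) :
    ∃ F : C(T, X), ∀ t x, H t = i x → F t = x := by
  obtain ⟨ρ, hρbase, hρcell⟩ := hY.exists_retraction
  choose u hu using fun α ↦ hY.exists_push_core he (hdim α) H
  have hcollar : ∀ {y}, y ∈ hY.collar → hY.radius y ≠ 0 := fun hy ↦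
    (one_half_pos.trans hy).ne'
  let S : Option ι → Set T
    | none => H ⁻¹' hY.collar
    | some α => H ⁻¹' hY.core α
  let G : ∀ o, C(S o, X)
    | none => ρ.comp ⟨fun t ↦ ⟨H t, hcollar t.2⟩, by fun_prop⟩
    | some α => (u α).restrict _
  have hoverlap : ∀ {α t} (ht : H t ∈ hY.collar), H t ∈ hY.core α →
      ρ ⟨H t, hcollar ht⟩ = u α t := by
    intro α t ht hα
    obtain ⟨z, hz⟩ := hY.exists_eq_of_mem_core hα
    have hz0 : z.1 ≠ 0 := by
      rw [← norm_ne_zero_iff, ← hY.radius_cell, hz]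
      exact hcollar ht
    exact (hρcell _ α z hz0 hz.symm).trans (hu α t z hz0 hz.symm ht hα).symm
  have hG : ∀ o o' t (ht : t ∈ S o) (ht' : t ∈ S o'), G o ⟨t, ht⟩ = G o' ⟨t, ht'⟩
    | none, none, _, _, _ => rfl
    | none, some _, _, ht, ht' => hoverlap ht ht'
    | some _, none, _, ht, ht' => (hoverlap ht' ht).symm
    | some _, some _, t, ht, ht' =>
      congrArg (u · t) (hY.eq_of_mem_core_of_mem_core (y := H t) ht ht')
  have hS : ∀ t, ∃ o, S o ∈ 𝓝 t := fun t ↦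
    (hY.mem_collar_or_exists_mem_core (H t)).elim
      (fun ht ↦ ⟨none, (hY.isOpen_collar.preimage H.continuous).mem_nhds ht⟩)
      fun ⟨α, hα⟩ ↦ ⟨some α, ((hY.isOpen_core α).preimage H.continuous).mem_nhds hα⟩
  refine ⟨ContinuousMap.liftCover S G hG hS, fun t x htx ↦ ?_⟩
  have ht : t ∈ S none := by
    change H t ∈ hY.collar
    exact htx ▸ hY.base_mem_collar x
  exact (ContinuousMap.liftCover_coe (⟨t, ht⟩ : S none)).trans (hρbase _ x htx)

theorem homotopicRel_of_comp_homotopicRel (hY : IsCellAttachment φ i Φ) {e : unitInterval × T → E}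
    (he : IsClosedEmbedding e) (hdim : ∀ α, finrank ℝ E < ncell α) {f g : C(T, X)} {A : Set T}
    (h : (i.comp f).HomotopicRel (i.comp g) A) : f.HomotopicRel g A := by
  obtain ⟨H⟩ := h
  obtain ⟨F, hF⟩ := hY.exists_compression he hdim H.toContinuousMap
  exact ⟨⟨⟨F, fun t ↦ hF _ _ (H.apply_zero t), fun t ↦ hF _ _ (H.apply_one t)⟩,
    fun s t ht ↦ hF _ _ (H.eq_fst s ht)⟩⟩

end Compression

theorem joined_of_joined_base (hY : IsCellAttachment φ i Φ) (hdim : ∀ α, 1 < ncell α) {x y : X}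
    (h : Joined (i x) (i y)) : Joined x y := by
  obtain ⟨p⟩ := h
  obtain ⟨F, hF⟩ := hY.exists_compression (e := ((↑) : unitInterval → ℝ))
    isClosed_Icc.isClosedEmbedding_subtypeVal (by simpa using hdim) p.toContinuousMap
  exact ⟨⟨F, hF 0 x p.source, hF 1 y p.target⟩⟩

theorem subsingleton_homotopyGroup (hY : IsCellAttachment φ i Φ) {N : Type*} [Fintype N]
    (hdim : ∀ α, Fintype.card N + 1 < ncell α) (x : X)
    [Subsingleton (HomotopyGroup N Y (i x))] : Subsingleton (HomotopyGroup N X x) := by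
  have he : IsClosedEmbedding
      (Prod.map (↑) (Pi.map fun _ ↦ (↑)) : unitInterval × (N → unitInterval) → ℝ × (N → ℝ)) :=
    isClosed_Icc.isClosedEmbedding_subtypeVal.prodMap
      (.piMap fun _ ↦ isClosed_Icc.isClosedEmbedding_subtypeVal)
  let push (f : GenLoop N X x) : GenLoop N Y (i x) :=
    ⟨i.comp f.1, fun z hz ↦ congrArg i (f.2 z hz)⟩
  refine ⟨Quotient.ind₂ fun f g ↦ Quotient.sound ?_⟩
  have hpush : GenLoop.Homotopic (push f) (push g) :=
    Quotient.exact (Subsingleton.elim (α := HomotopyGroup N Y (i x)) ⟦push f⟧ ⟦push g⟧)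
  exact hY.homotopicRel_of_comp_homotopicRel he (by simpa [add_comm] using hdim) hpush

end IsCellAttachment

theorem SpaceMConnected.mono {m n : ℕ} {Y : Type*} [TopologicalSpace Y] (hY : SpaceMConnected n Y)
    (hmn : m ≤ n) : SpaceMConnected m Y :=
  ⟨hY.1, hY.2.1, fun k hk hkm ↦ hY.2.2 k hk (hkm.trans hmn)⟩

theorem connected_of_attach_high_cells_general {m : ℕ} {X Y ι : Type u} [TopologicalSpace X]
    [TopologicalSpace Y] {ncell : ι → ℕ} {φ : ∀ α, C(unitSphere (ncell α), X)} {i : C(X, Y)}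
    {Φ : ∀ α, C(unitDisk (ncell α), Y)} (hatt : IsCellAttachment φ i Φ)
    (hcell : ∀ α, m + 2 ≤ ncell α) (hY : SpaceMConnected m Y) : SpaceMConnected m X := by
  obtain ⟨_, hpath, hπ⟩ := hY
  have hX : Nonempty X := hatt.nonempty_base fun α ↦ by grind
  refine ⟨hX, ⟨hX, fun x y ↦ ?_⟩, fun k hk hkm x ↦ ?_⟩
  · exact hatt.joined_of_joined_base (fun α ↦ by grind) (hpath.joined (i x) (i y))
  · have := hπ k hk hkm (i x)
    exact hatt.subsingleton_homotopyGroup (fun α ↦ by grind [Fintype.card_fin]) x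

/-- Suppose `Y` is obtained from `X` by attaching cells of dimensions `ncell α ≥ m + 2`:
`Y` is the pushout (in the category of topological spaces, expressed by its universal
property) of `X` and the disks `D^{ncell α}` along attaching maps
`φ α : ∂D^{ncell α} → X`. If `Y` is `(m + 1)`-connected and `X` is nonempty, then `X` is
`m`-connected. -/
theorem connected_of_attach_high_cells (m : ℕ) (X Y : Type u)
    [TopologicalSpace X] [TopologicalSpace Y]
    (ι : Type u) (ncell : ι → ℕ) (hcell : ∀ α, m + 2 ≤ ncell α)
    (φ : ∀ α, C(↥(unitSphere (ncell α)), X))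
    (i : C(X, Y)) (Φ : ∀ α, C(↥(unitDisk (ncell α)), Y))
    (hcomm : ∀ α (z : ↥(unitSphere (ncell α))),
      Φ α ⟨z.1, Metric.sphere_subset_closedBall z.2⟩ = i (φ α z))
    (huniv : ∀ (Z : Type u) [TopologicalSpace Z] (g : C(X, Z))
      (h : ∀ α, C(↥(unitDisk (ncell α)), Z)),
      (∀ α (z : ↥(unitSphere (ncell α))),
        h α ⟨z.1, Metric.sphere_subset_closedBall z.2⟩ = g (φ α z)) →
      ∃! k : C(Y, Z), k.comp i = g ∧ ∀ α, k.comp (Φ α) = h α)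
    (hY : SpaceMConnected (m + 1) Y) (hX : Nonempty X) :
    SpaceMConnected m X :=
  connected_of_attach_high_cells_general ⟨hcomm, huniv⟩ hcell (hY.mono m.le_succ)
end
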